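/- arXiv:2412.05906 — 7 statements merged into one kernel-verified Lean document; each statement's English description precedes it below -/
import Mathlib

section
/- Let (Ω, F, ℙ) be a probability space carrying real random variables w_x, w_y with E[w_x] = E[w_y] = 0, E[w_x^2] = E[w_y^2] = 1 and E[w_x w_y] = ρ, and a real random variable u with E[u^2] < ∞ that is independent of the pair (w_x, w_y). Fix reals A, B, C, D, Ā, C̄ and x, y ∈ ℝ, let P be a symmetric real 2×2 matrix, and set X₁ = A x + B u + (C x + D u) w_x and Y₁ = Ā y + C̄ y w_y. Then E[(X₁, Y₁) P (X₁, Y₁)ᵀ] = (x, y) F (x, y)ᵀ + 2 (H · (x, y)) E[u] + G E[u^2], where F is the symmetric 2×2 matrix with F₁₁ = (A² + C²) P₁₁, F₁₂ = F₂₁ = (A Ā + ρ C C̄) P₁₂, F₂₂ = (Ā² + C̄²) P₂₂; H = ((A B + C D) P₁₁, (Ā B + ρ C̄ D) P₂₁) ∈ ℝ²; and G = (B² + D²) P₁₁. -/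
open MeasureTheory ProbabilityTheory Matrix

/-!
Write the next state as `Z = α + β * v` (entrywise product), where `α` and `β` are affine in the
control and `v` is the noise. Since `v` is centred and independent of `(α, β)`, both cross terms of
`E[Zᵢ Zⱼ]` vanish, so `E[Zᵢ Zⱼ] = E[αᵢ αⱼ] + Γᵢⱼ E[βᵢ βⱼ]` with `Γᵢⱼ = E[vᵢ vⱼ]`. Summing against
`P` gives `E[Zᵀ P Z] = E[αᵀ P α] + E[βᵀ (P ⊙ Γ) β]`, where both integrands are quadratic polynomials
in the control.
-/

section QuadraticForms

variable {Ω m n : Type*} [MeasurableSpace Ω] {μ : Measure Ω} [Fintype m] [Fintype n]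

theorem integral_dotProduct_mulVec (M : Matrix m n ℝ) {X : Ω → m → ℝ} {Y : Ω → n → ℝ}
    (hXY : ∀ i j, Integrable (fun ω ↦ X ω i * Y ω j) μ) :
    ∫ ω, X ω ⬝ᵥ (M *ᵥ Y ω) ∂μ = ∑ i, ∑ j, M i j * ∫ ω, X ω i * Y ω j ∂μ := by
  have hterm (i : m) (j : n) : Integrable (fun ω ↦ M i j * (X ω i * Y ω j)) μ :=
    (hXY i j).const_mul (M i j)
  have hexpand (ω : Ω) : X ω ⬝ᵥ (M *ᵥ Y ω) = ∑ i, ∑ j, M i j * (X ω i * Y ω j) := by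
    simp only [dotProduct, mulVec, Finset.mul_sum]
    exact Finset.sum_congr rfl fun i _ ↦ Finset.sum_congr rfl fun j _ ↦ mul_left_comm _ _ _
  simp_rw [hexpand]
  rw [integral_finsetSum _ fun i _ ↦ integrable_finsetSum _ fun j _ ↦ hterm i j]
  simp_rw [integral_finsetSum _ fun j _ ↦ hterm _ j, integral_const_mul]

theorem integral_add_smul_dotProduct_mulVec [IsProbabilityMeasure μ] {u : Ω → ℝ}
    (hu : MemLp u 2 μ) (M : Matrix m n ℝ) (a b : m → ℝ) (c d : n → ℝ) :
    ∫ ω, (a + u ω • b) ⬝ᵥ (M *ᵥ (c + u ω • d)) ∂μ =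
      a ⬝ᵥ (M *ᵥ c) + (a ⬝ᵥ (M *ᵥ d) + b ⬝ᵥ (M *ᵥ c)) * ∫ ω, u ω ∂μ
        + b ⬝ᵥ (M *ᵥ d) * ∫ ω, u ω ^ 2 ∂μ := by
  have hlinear : Integrable (fun ω ↦ (a ⬝ᵥ (M *ᵥ d) + b ⬝ᵥ (M *ᵥ c)) * u ω) μ :=
    (hu.integrable one_le_two).const_mul _
  have hsquare : Integrable (fun ω ↦ b ⬝ᵥ (M *ᵥ d) * u ω ^ 2) μ := hu.integrable_sq.const_mul _
  calc
    _ = ∫ ω, (a ⬝ᵥ (M *ᵥ c) + (a ⬝ᵥ (M *ᵥ d) + b ⬝ᵥ (M *ᵥ c)) * u ω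
          + b ⬝ᵥ (M *ᵥ d) * u ω ^ 2) ∂μ := by
      congr 1 with ω
      simp only [mulVec_add, mulVec_smul, add_dotProduct, dotProduct_add, smul_dotProduct,
        dotProduct_smul, smul_eq_mul]
      ring
    _ = _ := by
      rw [integral_add (by fun_prop) hsquare, integral_add (integrable_const _) hlinear,
        integral_const_mul, integral_const_mul, integral_const, probReal_univ, one_smul]

end QuadraticForms

section MultiplicativeNoise

variable {Ω ι : Type*} [MeasurableSpace Ω] {μ : Measure Ω}

theorem memLp_mul_of_indepFun {𝕜 : Type*} [NormedRing 𝕜] [NormMulClass 𝕜] [MeasurableSpace 𝕜]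
    [OpensMeasurableSpace 𝕜] {p : ENNReal} {X Y : Ω → 𝕜} (hX : MemLp X p μ) (hY : MemLp Y p μ)
    (hindep : X ⟂ᵢ[μ] Y) : MemLp (fun ω ↦ X ω * Y ω) p μ := by
  have hXY : AEStronglyMeasurable (fun ω ↦ X ω * Y ω) μ :=
    hX.aestronglyMeasurable.mul hY.aestronglyMeasurable
  rcases eq_or_ne p 0 with rfl | hp_zero
  · exact memLp_zero_iff_aestronglyMeasurable.mpr hXY
  rcases eq_or_ne p ⊤ with rfl | hp_top
  · exact hY.mul' hX
  have hmeas : Measurable fun x : 𝕜 ↦ ‖x‖ ^ p.toReal := by fun_prop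
  have hnorm : Integrable (fun ω ↦ ‖X ω‖ ^ p.toReal * ‖Y ω‖ ^ p.toReal) μ :=
    (hindep.comp hmeas hmeas).integrable_mul (hX.integrable_norm_rpow hp_zero hp_top)
      (hY.integrable_norm_rpow hp_zero hp_top)
  rw [← integrable_norm_rpow_iff hXY hp_zero hp_top]
  simpa only [norm_mul, Real.mul_rpow (norm_nonneg _) (norm_nonneg _)] using hnorm

/-- The matrix of mixed second moments `E[vᵢ vⱼ]` of a random vector `v`. The means are not
subtracted: it is used for centred noise, where it is the covariance matrix. -/
noncomputable def secondMomentMatrix (v : Ω → ι → ℝ) (μ : Measure Ω) : Matrix ι ι ℝ :=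
  .of fun i j ↦ ∫ ω, v ω i * v ω j ∂μ

variable {α β v : Ω → ι → ℝ}

theorem integral_mul_mul_noise_apply_eq_zero (hα : AEStronglyMeasurable α μ)
    (hβ : AEStronglyMeasurable β μ) (hv : AEStronglyMeasurable v μ)
    (hv_mean : ∀ i, ∫ ω, v ω i ∂μ = 0) (hindep : (fun ω ↦ (α ω, β ω)) ⟂ᵢ[μ] v) (i j : ι) :
    ∫ ω, α ω i * (β ω * v ω) j ∂μ = 0 := by
  have hindep_ij : (fun ω ↦ α ω i * β ω j) ⟂ᵢ[μ] fun ω ↦ v ω j :=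
    hindep.comp (φ := fun p : (ι → ℝ) × (ι → ℝ) ↦ p.1 i * p.2 j) (by fun_prop)
      (measurable_pi_apply j)
  simp only [Pi.mul_apply, ← mul_assoc]
  rw [hindep_ij.integral_fun_mul_eq_mul_integral
    (((continuous_apply i).comp_aestronglyMeasurable hα).mul
      ((continuous_apply j).comp_aestronglyMeasurable hβ))
    ((continuous_apply j).comp_aestronglyMeasurable hv), hv_mean, mul_zero]

theorem integral_mul_noise_apply_mul_apply (hβ : AEStronglyMeasurable β μ)
    (hv : AEStronglyMeasurable v μ) (hindep : β ⟂ᵢ[μ] v) (i j : ι) :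
    ∫ ω, (β ω * v ω) i * (β ω * v ω) j ∂μ =
      secondMomentMatrix v μ i j * ∫ ω, β ω i * β ω j ∂μ := by
  have hmeas : Measurable fun w : ι → ℝ ↦ w i * w j := by fun_prop
  have hcont : Continuous fun w : ι → ℝ ↦ w i * w j := by fun_prop
  have hindep_ij : (fun ω ↦ β ω i * β ω j) ⟂ᵢ[μ] fun ω ↦ v ω i * v ω j :=
    hindep.comp hmeas hmeas
  simp only [Pi.mul_apply, mul_mul_mul_comm (β _ i)]
  rw [hindep_ij.integral_fun_mul_eq_mul_integral (hcont.comp_aestronglyMeasurable hβ)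
    (hcont.comp_aestronglyMeasurable hv), mul_comm]
  rfl

variable [Fintype ι]

theorem integrable_apply_mul_apply (hα : MemLp α 2 μ) (hβ : MemLp β 2 μ) (i j : ι) :
    Integrable (fun ω ↦ α ω i * β ω j) μ :=
  (hα.eval i).integrable_mul (hβ.eval j)

theorem memLp_mul_noise {p : ENNReal} (hβ : MemLp β p μ) (hv : MemLp v p μ) (hindep : β ⟂ᵢ[μ] v) :
    MemLp (fun ω ↦ β ω * v ω) p μ :=
  .of_eval fun i ↦ memLp_mul_of_indepFun (hβ.eval i) (hv.eval i)
    (hindep.comp (measurable_pi_apply i) (measurable_pi_apply i))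

theorem integral_add_mul_noise_apply_mul_apply (hα : MemLp α 2 μ) (hβ : MemLp β 2 μ)
    (hv : MemLp v 2 μ) (hv_mean : ∀ i, ∫ ω, v ω i ∂μ = 0)
    (hindep : (fun ω ↦ (α ω, β ω)) ⟂ᵢ[μ] v) (i j : ι) :
    ∫ ω, (α ω + β ω * v ω) i * (α ω + β ω * v ω) j ∂μ =
      ∫ ω, α ω i * α ω j ∂μ + secondMomentMatrix v μ i j * ∫ ω, β ω i * β ω j ∂μ := by
  have hindep_β : β ⟂ᵢ[μ] v := hindep.comp measurable_snd measurable_id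
  have hβv : MemLp (fun ω ↦ β ω * v ω) 2 μ := memLp_mul_noise hβ hv hindep_β
  have hcross (k l : ι) : ∫ ω, α ω k * (β ω * v ω) l ∂μ = 0 :=
    integral_mul_mul_noise_apply_eq_zero hα.aestronglyMeasurable hβ.aestronglyMeasurable
      hv.aestronglyMeasurable hv_mean hindep k l
  have hαα := integrable_apply_mul_apply hα hα i j
  have hαβv := integrable_apply_mul_apply hα hβv
  have hβvβv := integrable_apply_mul_apply hβv hβv i j
  calc
    _ = ∫ ω, (α ω i * α ω j + α ω i * (β ω * v ω) j + α ω j * (β ω * v ω) i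
          + (β ω * v ω) i * (β ω * v ω) j) ∂μ := by
      congr 1 with ω
      simp only [Pi.add_apply]
      ring
    _ = ∫ ω, α ω i * α ω j ∂μ + ∫ ω, α ω i * (β ω * v ω) j ∂μ + ∫ ω, α ω j * (β ω * v ω) i ∂μ
          + ∫ ω, (β ω * v ω) i * (β ω * v ω) j ∂μ := by
      rw [integral_add (by fun_prop) hβvβv, integral_add (by fun_prop) (hαβv j i),
        integral_add hαα (hαβv i j)]
    _ = _ := by
      rw [hcross, hcross, add_zero, add_zero, integral_mul_noise_apply_mul_apply
        hβ.aestronglyMeasurable hv.aestronglyMeasurable hindep_β]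

theorem integral_add_mul_noise_dotProduct_mulVec (P : Matrix ι ι ℝ) (hα : MemLp α 2 μ)
    (hβ : MemLp β 2 μ) (hv : MemLp v 2 μ) (hv_mean : ∀ i, ∫ ω, v ω i ∂μ = 0)
    (hindep : (fun ω ↦ (α ω, β ω)) ⟂ᵢ[μ] v) :
    ∫ ω, (α ω + β ω * v ω) ⬝ᵥ (P *ᵥ (α ω + β ω * v ω)) ∂μ =
      ∫ ω, α ω ⬝ᵥ (P *ᵥ α ω) ∂μ + ∫ ω, β ω ⬝ᵥ ((P ⊙ secondMomentMatrix v μ) *ᵥ β ω) ∂μ := by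
  have hZ : MemLp (fun ω ↦ α ω + β ω * v ω) 2 μ :=
    hα.add (memLp_mul_noise hβ hv (hindep.comp measurable_snd measurable_id))
  rw [integral_dotProduct_mulVec P (integrable_apply_mul_apply hZ hZ),
    integral_dotProduct_mulVec P (integrable_apply_mul_apply hα hα),
    integral_dotProduct_mulVec _ (integrable_apply_mul_apply hβ hβ)]
  simp only [integral_add_mul_noise_apply_mul_apply hα hβ hv hv_mean hindep, hadamard_apply,
    mul_add, mul_assoc, Finset.sum_add_distrib]

theorem integral_affine_control_mul_noise_dotProduct_mulVec [IsProbabilityMeasure μ] {u : Ω → ℝ}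
    (P : Matrix ι ι ℝ) (a b c d : ι → ℝ) (hu : MemLp u 2 μ) (hv : MemLp v 2 μ)
    (hv_mean : ∀ i, ∫ ω, v ω i ∂μ = 0) (hindep : u ⟂ᵢ[μ] v) :
    ∫ ω, (a + u ω • b + (c + u ω • d) * v ω) ⬝ᵥ
        (P *ᵥ (a + u ω • b + (c + u ω • d) * v ω)) ∂μ =
      (a ⬝ᵥ (P *ᵥ a) + c ⬝ᵥ ((P ⊙ secondMomentMatrix v μ) *ᵥ c))
        + (a ⬝ᵥ (P *ᵥ b) + b ⬝ᵥ (P *ᵥ a) + (c ⬝ᵥ ((P ⊙ secondMomentMatrix v μ) *ᵥ d)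
            + d ⬝ᵥ ((P ⊙ secondMomentMatrix v μ) *ᵥ c))) * ∫ ω, u ω ∂μ
        + (b ⬝ᵥ (P *ᵥ b) + d ⬝ᵥ ((P ⊙ secondMomentMatrix v μ) *ᵥ d)) * ∫ ω, u ω ^ 2 ∂μ := by
  have haffine (e f : ι → ℝ) : MemLp (fun ω ↦ e + u ω • f) 2 μ :=
    (memLp_const e).add (.of_eval fun i ↦ hu.mul_const (f i))
  have hindep_affine : (fun ω ↦ (a + u ω • b, c + u ω • d)) ⟂ᵢ[μ] v :=
    hindep.comp (φ := fun t ↦ (a + t • b, c + t • d)) (by fun_prop) measurable_id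
  rw [integral_add_mul_noise_dotProduct_mulVec P (haffine a b) (haffine c d) hv hv_mean
      hindep_affine,
    integral_add_smul_dotProduct_mulVec hu, integral_add_smul_dotProduct_mulVec hu]
  ring

end MultiplicativeNoise

/-- One-step expectation of a quadratic form under the linear state dynamics
`X₁ = A x + B u + (C x + D u) w_x`, `Y₁ = Ā y + C̄ y w_y`, where the noises `w_x, w_y`
have mean 0, variance 1 and correlation `ρ`, and the (square-integrable) control `u` is
independent of the noise pair. -/
theorem stmt_1 {Ω : Type*} [MeasurableSpace Ω] (μ : Measure Ω) [IsProbabilityMeasure μ]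
    (wx wy u : Ω → ℝ) (hwxm : Measurable wx) (hwym : Measurable wy) (hum : Measurable u)
    (hwx2 : Integrable (fun ω => (wx ω) ^ 2) μ)
    (hwy2 : Integrable (fun ω => (wy ω) ^ 2) μ)
    (hu2 : Integrable (fun ω => (u ω) ^ 2) μ)
    (hwx0 : ∫ ω, wx ω ∂μ = 0) (hwy0 : ∫ ω, wy ω ∂μ = 0)
    (hwxv : ∫ ω, (wx ω) ^ 2 ∂μ = 1) (hwyv : ∫ ω, (wy ω) ^ 2 ∂μ = 1)
    (ρ : ℝ) (hρ : ∫ ω, wx ω * wy ω ∂μ = ρ)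
    (hindep : IndepFun u (fun ω => (wx ω, wy ω)) μ)
    (A B C D Abar Cbar x y : ℝ)
    (P : Matrix (Fin 2) (Fin 2) ℝ) (hP : P.IsSymm) :
    (∫ ω, ![A * x + B * u ω + (C * x + D * u ω) * wx ω,
            Abar * y + Cbar * y * wy ω] ⬝ᵥ
          (P *ᵥ ![A * x + B * u ω + (C * x + D * u ω) * wx ω,
                  Abar * y + Cbar * y * wy ω]) ∂μ)
      = ![x, y] ⬝ᵥ
          ((!![(A ^ 2 + C ^ 2) * P 0 0, (A * Abar + ρ * C * Cbar) * P 0 1;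
              (A * Abar + ρ * C * Cbar) * P 0 1, (Abar ^ 2 + Cbar ^ 2) * P 1 1]) *ᵥ ![x, y])
        + 2 * (![(A * B + C * D) * P 0 0, (Abar * B + ρ * Cbar * D) * P 1 0] ⬝ᵥ ![x, y])
            * (∫ ω, u ω ∂μ)
        + ((B ^ 2 + D ^ 2) * P 0 0) * (∫ ω, (u ω) ^ 2 ∂μ) := by
  have hv : MemLp (fun ω ↦ ![wx ω, wy ω]) 2 μ := .of_eval <| Fin.forall_fin_two.mpr
    ⟨(memLp_two_iff_integrable_sq hwxm.aestronglyMeasurable).mpr hwx2,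
      (memLp_two_iff_integrable_sq hwym.aestronglyMeasurable).mpr hwy2⟩
  have hv_mean : ∀ i, ∫ ω, ![wx ω, wy ω] i ∂μ = 0 := Fin.forall_fin_two.mpr ⟨hwx0, hwy0⟩
  have hΓ : secondMomentMatrix (fun ω ↦ ![wx ω, wy ω]) μ = !![1, ρ; ρ, 1] := by
    ext i j
    fin_cases i <;> fin_cases j <;>
      simp [secondMomentMatrix, ← sq, hwxv, hwyv, hρ, mul_comm (wy _) (wx _)]
  have hindep_vec : u ⟂ᵢ[μ] fun ω ↦ ![wx ω, wy ω] :=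
    hindep.comp (ψ := fun w : ℝ × ℝ ↦ ![w.1, w.2]) measurable_id (by fun_prop)
  have hstate (ω : Ω) : ![A * x + B * u ω + (C * x + D * u ω) * wx ω,
      Abar * y + Cbar * y * wy ω] = ![A * x, Abar * y] + u ω • ![B, 0] +
        (![C * x, Cbar * y] + u ω • ![D, 0]) * ![wx ω, wy ω] := by
    ext i
    fin_cases i <;> simp [mul_comm (u ω)]
  simp_rw [hstate]
  rw [integral_affine_control_mul_noise_dotProduct_mulVec P _ _ _ _
    ((memLp_two_iff_integrable_sq hum.aestronglyMeasurable).mpr hu2) hv hv_mean hindep_vec, hΓ]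
  have hP_symm : P 1 0 = P 0 1 := hP.apply 0 1
  simp only [dotProduct, mulVec, Fin.sum_univ_two, Fin.isValue, cons_val_zero, cons_val_one,
    cons_val_fin_one, cons_val', of_apply, hadamard_apply, hP_symm]
  ring
end

section
/- Let m ≥ 1, let G be a symmetric positive-definite m×m real matrix, b ∈ ℝ^m and λ > 0. For every measurable probability density π : ℝ^m → [0, ∞) with ∫ ‖u‖² π(u) du < ∞ and ∫ π(u) |ln π(u)| du < ∞, one has ∫_{ℝ^m} (2 b·u + uᵀ G u) π(u) du + λ ∫_{ℝ^m} π(u) ln π(u) du ≥ −bᵀ G⁻¹ b + (λ/2) ln((1/(πλ))^m det G), and equality holds when π is the density of the multivariate normal distribution with mean −G⁻¹ b and covariance matrix (λ/2) G⁻¹. -/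
open MeasureTheory Matrix

/-- Density of the multivariate normal distribution on `ℝ^m` with mean `μ` and
(positive-definite) covariance matrix `S`. -/
noncomputable def mvGaussianDensity (m : ℕ) (μ : Fin m → ℝ)
    (S : Matrix (Fin m) (Fin m) ℝ) : (Fin m → ℝ) → ℝ := fun u =>
  (Real.sqrt ((2 * Real.pi) ^ m * S.det))⁻¹ *
    Real.exp (-(1 / 2) * ((u - μ) ⬝ᵥ (S⁻¹ *ᵥ (u - μ))))

/-!
A cost `c` at temperature `T > 0` has the Gibbs density `q = exp (-c / T) / Z`, which satisfies
`T ln q = -c - T ln Z`. Hence `∫ c p + T ∫ p ln p = -T ln Z + T ∫ p ln (p / q)` for every density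
`p`, and Gibbs' inequality makes the last term nonnegative, with equality at `p = q`.

For the linear-quadratic cost, completing the square makes `q` Gaussian, and `Z` becomes the
standard Gaussian integral by the linear substitution `v = B u`, where `G = Bᵀ B`.
-/

open ProbabilityTheory

section GibbsVariationalPrinciple

variable {α : Type*} [MeasurableSpace α] {μ : Measure α} {c p q : α → ℝ} {T : ℝ}

lemma sub_le_mul_log_sub_mul_log {x y : ℝ} (hx : 0 ≤ x) (hy : 0 < y) :
    x - y ≤ x * Real.log x - x * Real.log y := by
  rcases hx.eq_or_lt with rfl | hx
  · simpa using hy.le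
  have hlog : x * Real.log (y / x) ≤ x * (y / x - 1) :=
    mul_le_mul_of_nonneg_left (Real.log_le_sub_one_of_pos (div_pos hy hx)) hx.le
  rw [Real.log_div hy.ne' hx.ne', mul_sub, mul_sub, mul_div_cancel₀ _ hx.ne'] at hlog
  linarith

lemma integral_mul_log_le_integral_mul_log_self (hp_nonneg : 0 ≤ᵐ[μ] p) (hq_pos : ∀ x, 0 < q x)
    (hp : Integrable p μ) (hq : Integrable q μ) (hmass : ∫ x, q x ∂μ ≤ ∫ x, p x ∂μ)
    (hp_log : Integrable (fun x => p x * Real.log (p x)) μ)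
    (hq_log : Integrable (fun x => p x * Real.log (q x)) μ) :
    ∫ x, p x * Real.log (q x) ∂μ ≤ ∫ x, p x * Real.log (p x) ∂μ := by
  have hsub : ∫ x, (p x - q x) ∂μ ≤ ∫ x, (p x * Real.log (p x) - p x * Real.log (q x)) ∂μ := by
    refine integral_mono_ae (hp.sub hq) (hp_log.sub hq_log) ?_
    filter_upwards [hp_nonneg] with x hx using sub_le_mul_log_sub_mul_log hx (hq_pos x)
  rw [integral_sub hp hq, integral_sub hp_log hq_log] at hsub
  linarith

/-- The entropy-regularized cost `∫ c p dμ + T ∫ p ln p dμ` of a density `p` with respect to `μ`,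
for the cost function `c` at temperature `T`. -/
noncomputable def freeEnergy (μ : Measure α) (c : α → ℝ) (T : ℝ) (p : α → ℝ) : ℝ :=
  (∫ x, c x * p x ∂μ) + T * ∫ x, p x * Real.log (p x) ∂μ

/-- The density `exp (-c / T) / Z`, with respect to `μ`, of the Gibbs measure with energy `c` at
temperature `T`. The partition function is `Z = mgf c μ (-T⁻¹)`, written as the exponential of
`cgf c μ (-T⁻¹)`. -/
noncomputable def gibbsDensity (μ : Measure α) (c : α → ℝ) (T : ℝ) (x : α) : ℝ :=
  Real.exp (-T⁻¹ * c x - cgf c μ (-T⁻¹))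

lemma gibbsDensity_pos (x : α) : 0 < gibbsDensity μ c T x := Real.exp_pos _

lemma log_gibbsDensity (x : α) :
    Real.log (gibbsDensity μ c T x) = -T⁻¹ * c x - cgf c μ (-T⁻¹) := Real.log_exp _

lemma gibbsDensity_eq_div_mgf [NeZero μ] (hint : -T⁻¹ ∈ integrableExpSet c μ) (x : α) :
    gibbsDensity μ c T x = Real.exp (-T⁻¹ * c x) / mgf c μ (-T⁻¹) := by
  rw [gibbsDensity, Real.exp_sub, exp_cgf hint]

lemma integrable_gibbsDensity [NeZero μ] (hint : -T⁻¹ ∈ integrableExpSet c μ) :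
    Integrable (gibbsDensity μ c T) μ := by
  rw [funext (gibbsDensity_eq_div_mgf hint)]
  exact (integrable_of_mem_integrableExpSet hint).div_const _

lemma integral_gibbsDensity [NeZero μ] (hint : -T⁻¹ ∈ integrableExpSet c μ) :
    ∫ x, gibbsDensity μ c T x ∂μ = 1 := by
  simp_rw [gibbsDensity_eq_div_mgf hint, integral_div]
  exact div_self (mgf_pos_iff.2 hint).ne'

lemma integrable_mul_gibbsDensity [NeZero μ]
    (hint : -T⁻¹ ∈ interior (integrableExpSet c μ)) :
    Integrable (fun x => c x * gibbsDensity μ c T x) μ := by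
  simp_rw [gibbsDensity_eq_div_mgf (interior_subset hint), ← mul_div_assoc]
  simpa only [pow_one] using
    (integrable_pow_mul_exp_of_mem_interior_integrableExpSet hint 1).div_const (mgf c μ (-T⁻¹))

lemma mul_log_gibbsDensity (x : α) :
    p x * Real.log (gibbsDensity μ c T x) = -T⁻¹ * (c x * p x) - cgf c μ (-T⁻¹) * p x := by
  rw [log_gibbsDensity]
  ring

lemma integrable_mul_log_gibbsDensity (hp : Integrable p μ)
    (hcost : Integrable (fun x => c x * p x) μ) :
    Integrable (fun x => p x * Real.log (gibbsDensity μ c T x)) μ := by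
  simp_rw [mul_log_gibbsDensity]
  exact (hcost.const_mul _).sub (hp.const_mul _)

lemma integral_mul_log_gibbsDensity (hp : Integrable p μ) (hp_one : ∫ x, p x ∂μ = 1)
    (hcost : Integrable (fun x => c x * p x) μ) :
    ∫ x, p x * Real.log (gibbsDensity μ c T x) ∂μ =
      -T⁻¹ * (∫ x, c x * p x ∂μ) - cgf c μ (-T⁻¹) := by
  simp_rw [mul_log_gibbsDensity]
  rw [integral_sub (hcost.const_mul _) (hp.const_mul _), integral_const_mul, integral_const_mul,
    hp_one, mul_one]

theorem neg_mul_cgf_le_freeEnergy (hT : 0 < T) (hint : -T⁻¹ ∈ integrableExpSet c μ)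
    (hp_nonneg : 0 ≤ᵐ[μ] p) (hp_one : ∫ x, p x ∂μ = 1)
    (hcost : Integrable (fun x => c x * p x) μ)
    (hentropy : Integrable (fun x => p x * Real.log (p x)) μ) :
    -T * cgf c μ (-T⁻¹) ≤ freeEnergy μ c T p := by
  have : NeZero μ := ⟨by rintro rfl; simp at hp_one⟩
  have hp : Integrable p μ := .of_integral_ne_zero (by simp [hp_one])
  have hgibbs := integral_mul_log_le_integral_mul_log_self hp_nonneg gibbsDensity_pos hp
    (integrable_gibbsDensity hint) (by rw [integral_gibbsDensity hint, hp_one]) hentropy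
    (integrable_mul_log_gibbsDensity hp hcost)
  rw [integral_mul_log_gibbsDensity hp hp_one hcost] at hgibbs
  calc -T * cgf c μ (-T⁻¹)
      = (∫ x, c x * p x ∂μ) + T * (-T⁻¹ * (∫ x, c x * p x ∂μ) - cgf c μ (-T⁻¹)) := by
        field_simp
        ring
    _ ≤ freeEnergy μ c T p := by
        unfold freeEnergy
        gcongr

theorem freeEnergy_gibbsDensity [NeZero μ] (hT : T ≠ 0)
    (hint : -T⁻¹ ∈ interior (integrableExpSet c μ)) :
    freeEnergy μ c T (gibbsDensity μ c T) = -T * cgf c μ (-T⁻¹) := by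
  rw [freeEnergy, integral_mul_log_gibbsDensity (integrable_gibbsDensity (interior_subset hint))
    (integral_gibbsDensity (interior_subset hint)) (integrable_mul_gibbsDensity hint)]
  field_simp
  ring

end GibbsVariationalPrinciple

section GaussianIntegral

variable {ι : Type*} [Fintype ι]

lemma integral_exp_neg_dotProduct_self :
    ∫ v : ι → ℝ, Real.exp (-(v ⬝ᵥ v)) = √(Real.pi ^ Fintype.card ι) := by
  have hprod (v : ι → ℝ) : Real.exp (-(v ⬝ᵥ v)) = ∏ i, Real.exp (-1 * v i ^ 2) := by
    rw [← Real.exp_sum, dotProduct, ← Finset.sum_neg_distrib]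
    simp_rw [neg_one_mul, sq]
  simp_rw [hprod]
  rw [integral_fintype_prod_volume_eq_pow (fun x : ℝ => Real.exp (-1 * x ^ 2)), integral_gaussian,
    div_one, Real.sqrt_eq_rpow, Real.sqrt_eq_rpow, Real.rpow_pow_comm Real.pi_pos.le]

variable [DecidableEq ι] {G : Matrix ι ι ℝ}

lemma integral_comp_mulVec {E : Type*} [NormedAddCommGroup E] [NormedSpace ℝ E]
    {B : Matrix ι ι ℝ} (hB : B.det ≠ 0) (f : (ι → ℝ) → E) :
    ∫ u, f (B *ᵥ u) = |B.det|⁻¹ • ∫ v, f v := by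
  have hemb : MeasurableEmbedding (toLin' B) :=
    (LinearMap.continuous_of_finiteDimensional _).measurableEmbedding
      (mulVec_injective_of_det_ne_zero hB)
  calc ∫ u, f (B *ᵥ u) = ∫ v, f v ∂(Measure.map (toLin' B) volume) := by
        simp_rw [hemb.integral_map, toLin'_apply]
    _ = |B.det|⁻¹ • ∫ v, f v := by
        rw [Real.map_matrix_volume_pi_eq_smul_volume_pi hB, integral_smul_measure,
          ENNReal.toReal_ofReal (abs_nonneg _), abs_inv]

lemma integral_exp_neg_dotProduct_mulVec_self (hG : G.PosDef) :
    ∫ u : ι → ℝ, Real.exp (-(u ⬝ᵥ (G *ᵥ u))) = √(Real.pi ^ Fintype.card ι / G.det) := by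
  open scoped MatrixOrder in
  obtain ⟨B, hB, rfl⟩ :=
    CStarAlgebra.isStrictlyPositive_iff_eq_star_mul_self.1 hG.isStrictlyPositive
  have hdet : B.det ≠ 0 := ((isUnit_iff_isUnit_det B).1 hB).ne_zero
  have hquad (u : ι → ℝ) : u ⬝ᵥ ((star B * B) *ᵥ u) = (B *ᵥ u) ⬝ᵥ (B *ᵥ u) := by
    rw [star_eq_conjTranspose, conjTranspose_eq_transpose_of_trivial, ← mulVec_mulVec,
      dotProduct_mulVec, vecMul_transpose]
  simp_rw [hquad]
  rw [integral_comp_mulVec hdet fun v => Real.exp (-(v ⬝ᵥ v)), integral_exp_neg_dotProduct_self,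
    det_mul, star_eq_conjTranspose, det_conjTranspose, star_trivial,
    Real.sqrt_div' _ (mul_self_nonneg _), Real.sqrt_mul_self_eq_abs, smul_eq_mul, inv_mul_eq_div]

end GaussianIntegral

section LinQuadCost

variable {ι : Type*} [Fintype ι]

/-- The cost `2 bᵀu + uᵀGu` of a control `u`. -/
def linQuadCost (G : Matrix ι ι ℝ) (b u : ι → ℝ) : ℝ :=
  2 * (b ⬝ᵥ u) + u ⬝ᵥ (G *ᵥ u)

lemma sq_eval_le_sum_sq (u : ι → ℝ) (i : ι) : u i ^ 2 ≤ ∑ k, u k ^ 2 :=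
  Finset.single_le_sum (f := fun k => u k ^ 2) (fun _ _ => sq_nonneg _) (Finset.mem_univ i)

lemma integrable_eval_mul {μ : Measure (ι → ℝ)} {p : (ι → ℝ) → ℝ} (hp : Integrable p μ)
    (hp_sq : Integrable (fun u => (∑ i, u i ^ 2) * p u) μ) (i : ι) :
    Integrable (fun u => u i * p u) μ := by
  refine (hp.add hp_sq).mono
    ((measurable_pi_apply i).aestronglyMeasurable.mul hp.aestronglyMeasurable)
    (.of_forall fun u => ?_)
  have habs : |u i| ≤ |1 + ∑ k, u k ^ 2| :=
    abs_le_abs (by nlinarith [sq_eval_le_sum_sq u i, sq_nonneg (u i - 1)])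
      (by nlinarith [sq_eval_le_sum_sq u i, sq_nonneg (u i + 1)])
  calc ‖u i * p u‖ ≤ |1 + ∑ k, u k ^ 2| * ‖p u‖ := by rw [norm_mul, Real.norm_eq_abs]; gcongr
    _ = ‖p u + (∑ k, u k ^ 2) * p u‖ := by rw [← Real.norm_eq_abs, ← norm_mul, one_add_mul]

lemma integrable_eval_mul_eval_mul {μ : Measure (ι → ℝ)} {p : (ι → ℝ) → ℝ}
    (hp : AEStronglyMeasurable p μ) (hp_sq : Integrable (fun u => (∑ i, u i ^ 2) * p u) μ)
    (i j : ι) : Integrable (fun u => u i * u j * p u) μ := by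
  refine hp_sq.mono (by fun_prop) (.of_forall fun u => ?_)
  have habs : |u i * u j| ≤ |∑ k, u k ^ 2| :=
    abs_le_abs
      (by nlinarith [sq_eval_le_sum_sq u i, sq_eval_le_sum_sq u j, sq_nonneg (u i - u j)])
      (by nlinarith [sq_eval_le_sum_sq u i, sq_eval_le_sum_sq u j, sq_nonneg (u i + u j)])
  rw [norm_mul _ (p u), norm_mul _ (p u)]
  exact mul_le_mul_of_nonneg_right habs (norm_nonneg (p u))

lemma integrable_linQuadCost_mul {μ : Measure (ι → ℝ)} {p : (ι → ℝ) → ℝ} (hp : Integrable p μ)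
    (hp_sq : Integrable (fun u => (∑ i, u i ^ 2) * p u) μ) (G : Matrix ι ι ℝ) (b : ι → ℝ) :
    Integrable (fun u => linQuadCost G b u * p u) μ := by
  have hsum (u : ι → ℝ) : linQuadCost G b u * p u =
      (∑ i, 2 * b i * (u i * p u)) + ∑ i, ∑ j, G i j * (u i * u j * p u) := by
    simp only [linQuadCost, dotProduct, mulVec, add_mul, Finset.mul_sum, Finset.sum_mul]
    congr 1 <;> simp only [mul_assoc, mul_left_comm]
  simp_rw [hsum]
  exact (integrable_finsetSum _ fun i _ => (integrable_eval_mul hp hp_sq i).const_mul _).add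
    (integrable_finsetSum _ fun i _ => integrable_finsetSum _ fun j _ =>
      (integrable_eval_mul_eval_mul hp.aestronglyMeasurable hp_sq i j).const_mul _)

variable {G : Matrix ι ι ℝ} {T k : ℝ}

lemma linQuadCost_eq_sub [DecidableEq ι] (hsymm : G.IsSymm) (hdet : IsUnit G.det)
    (b u : ι → ℝ) :
    linQuadCost G b u =
      (u - -(G⁻¹ *ᵥ b)) ⬝ᵥ (G *ᵥ (u - -(G⁻¹ *ᵥ b))) - b ⬝ᵥ (G⁻¹ *ᵥ b) := by
  have hcancel : G *ᵥ (G⁻¹ *ᵥ b) = b := by rw [mulVec_mulVec, mul_nonsing_inv _ hdet, one_mulVec]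
  have hcross : (G⁻¹ *ᵥ b) ⬝ᵥ (G *ᵥ u) = b ⬝ᵥ u := by
    rw [dotProduct_mulVec, ← mulVec_transpose, hsymm.eq, hcancel]
  rw [linQuadCost, sub_neg_eq_add, mulVec_add, hcancel, add_dotProduct, dotProduct_add,
    dotProduct_add, hcross, dotProduct_comm u b, dotProduct_comm (G⁻¹ *ᵥ b) b]
  ring

lemma mgf_linQuadCost [DecidableEq ι] (hG : G.PosDef) (b : ι → ℝ) (hk : 0 < k) :
    mgf (linQuadCost G b) volume (-k) =
      Real.exp (k * (b ⬝ᵥ (G⁻¹ *ᵥ b))) * √((Real.pi / k) ^ Fintype.card ι / G.det) := by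
  have hsq (u : ι → ℝ) : Real.exp (-k * linQuadCost G b u) =
      Real.exp (k * (b ⬝ᵥ (G⁻¹ *ᵥ b))) *
        Real.exp (-((u - -(G⁻¹ *ᵥ b)) ⬝ᵥ ((k • G) *ᵥ (u - -(G⁻¹ *ᵥ b))))) := by
    rw [linQuadCost_eq_sub (isHermitian_iff_isSymm.1 hG.isHermitian) hG.det_pos.ne'.isUnit,
      ← Real.exp_add, smul_mulVec, dotProduct_smul, smul_eq_mul]
    ring_nf
  simp_rw [mgf, hsq]
  rw [integral_const_mul,
    integral_sub_right_eq_self (μ := volume) (fun u => Real.exp (-(u ⬝ᵥ ((k • G) *ᵥ u)))),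
    integral_exp_neg_dotProduct_mulVec_self (hG.smul hk), det_smul, div_pow, div_div]

lemma neg_mem_interior_integrableExpSet_linQuadCost (hG : G.PosDef) (b : ι → ℝ) (hk : 0 < k) :
    -k ∈ interior (integrableExpSet (linQuadCost G b) volume) := by
  classical
  refine mem_interior.2 ⟨Set.Iio 0, fun t ht => mgf_pos_iff.1 ?_, isOpen_Iio, neg_lt_zero.2 hk⟩
  have hdet := hG.det_pos
  have hk : 0 < -t := neg_pos.2 (Set.mem_Iio.1 ht)
  rw [← neg_neg t, mgf_linQuadCost hG b hk]
  positivity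

lemma neg_mul_cgf_linQuadCost [DecidableEq ι] (hG : G.PosDef) (b : ι → ℝ) (hT : 0 < T) :
    -T * cgf (linQuadCost G b) volume (-T⁻¹) =
      -(b ⬝ᵥ (G⁻¹ *ᵥ b)) +
        (T / 2) * Real.log ((1 / (Real.pi * T)) ^ Fintype.card ι * G.det) := by
  have hdet := hG.det_pos
  have hinv : (Real.pi / T⁻¹) ^ Fintype.card ι / G.det =
      ((1 / (Real.pi * T)) ^ Fintype.card ι * G.det)⁻¹ := by
    rw [div_inv_eq_mul, one_div, inv_pow, mul_inv, inv_inv, div_eq_mul_inv]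
  rw [cgf, mgf_linQuadCost hG b (inv_pos.2 hT), hinv,
    Real.log_mul (Real.exp_pos _).ne' (by positivity), Real.log_exp,
    Real.log_sqrt (by positivity), Real.log_inv]
  field_simp
  ring

end LinQuadCost

lemma mvGaussianDensity_eq_gibbsDensity {m : ℕ} {G : Matrix (Fin m) (Fin m) ℝ} {T : ℝ}
    (hG : G.PosDef) (b : Fin m → ℝ) (hT : 0 < T) :
    mvGaussianDensity m (-(G⁻¹ *ᵥ b)) ((T / 2) • G⁻¹) =
      gibbsDensity volume (linQuadCost G b) T := by
  have hunit : IsUnit G.det := hG.det_pos.ne'.isUnit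
  have hprecision : ((T / 2) • G⁻¹)⁻¹ = (2 * T⁻¹) • G := by
    refine inv_eq_right_inv ?_
    rw [smul_mul_smul_comm, nonsing_inv_mul _ hunit, show T / 2 * (2 * T⁻¹) = 1 by field_simp,
      one_smul]
  have hnormalizer : (2 * Real.pi) ^ m * ((T / 2) • G⁻¹).det = (Real.pi / T⁻¹) ^ m / G.det := by
    rw [det_smul, Fintype.card_fin, det_nonsing_inv, Ring.inverse_eq_inv', ← mul_assoc, ← mul_pow,
      div_eq_mul_inv _ G.det]
    congr 2
    field_simp
  have hint := interior_subset
    (neg_mem_interior_integrableExpSet_linQuadCost hG b (inv_pos.2 hT))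
  ext u
  rw [gibbsDensity_eq_div_mgf hint, mgf_linQuadCost hG b (inv_pos.2 hT),
    linQuadCost_eq_sub (isHermitian_iff_isSymm.1 hG.isHermitian) hunit, mvGaussianDensity,
    hprecision, hnormalizer, smul_mulVec, dotProduct_smul, smul_eq_mul, Fintype.card_fin,
    ← div_div, ← Real.exp_sub, inv_mul_eq_div]
  ring_nf

/-- Multivariate Gibbs variational principle: for a symmetric positive-definite `G`,
`b ∈ ℝ^m` and `λ > 0`, every probability density `p` on `ℝ^m` with finite second moment
and finite entropy integral satisfies
`∫ (2 b·u + uᵀGu) p du + λ ∫ p ln p du ≥ −bᵀG⁻¹b + (λ/2) ln((1/(πλ))^m det G)`,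
with equality for the Gaussian density with mean `−G⁻¹b` and covariance `(λ/2)G⁻¹`. -/
theorem stmt_6 (m : ℕ) (hm : 1 ≤ m) (G : Matrix (Fin m) (Fin m) ℝ)
    (hGsymm : G.IsSymm) (hGpd : G.PosDef) (b : Fin m → ℝ) (lam : ℝ) (hlam : 0 < lam) :
    (∀ p : (Fin m → ℝ) → ℝ, Measurable p → (∀ u, 0 ≤ p u) →
      (∫ u, p u) = 1 →
      Integrable (fun u => (∑ i, (u i) ^ 2) * p u) →
      Integrable (fun u => p u * |Real.log (p u)|) →
      (∫ u, (2 * (b ⬝ᵥ u) + u ⬝ᵥ (G *ᵥ u)) * p u) + lam * ∫ u, p u * Real.log (p u)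
        ≥ -(b ⬝ᵥ (G⁻¹ *ᵥ b))
          + (lam / 2) * Real.log ((1 / (Real.pi * lam)) ^ m * G.det))
    ∧
    ((∫ u, (2 * (b ⬝ᵥ u) + u ⬝ᵥ (G *ᵥ u))
          * mvGaussianDensity m (-(G⁻¹ *ᵥ b)) ((lam / 2) • G⁻¹) u)
        + lam * ∫ u, mvGaussianDensity m (-(G⁻¹ *ᵥ b)) ((lam / 2) • G⁻¹) u
            * Real.log (mvGaussianDensity m (-(G⁻¹ *ᵥ b)) ((lam / 2) • G⁻¹) u)
      = -(b ⬝ᵥ (G⁻¹ *ᵥ b))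
        + (lam / 2) * Real.log ((1 / (Real.pi * lam)) ^ m * G.det)) := by
  have hint := neg_mem_interior_integrableExpSet_linQuadCost hGpd b (inv_pos.2 hlam)
  have hmin := neg_mul_cgf_linQuadCost hGpd b hlam
  rw [Fintype.card_fin] at hmin
  rw [← hmin]
  refine ⟨fun p hp_meas hp_nonneg hp_one hp_sq hentropy => ?_, ?_⟩
  · have hp : Integrable p := .of_integral_ne_zero (by simp [hp_one])
    have hp_log : Integrable fun u => p u * Real.log (p u) :=
      hentropy.mono (by fun_prop) (.of_forall fun u => by simp)
    exact neg_mul_cgf_le_freeEnergy hlam (interior_subset hint) (.of_forall hp_nonneg) hp_one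
      (integrable_linQuadCost_mul hp hp_sq G b) hp_log
  · rw [mvGaussianDensity_eq_gibbsDensity hGpd b hlam]
    exact freeEnergy_gibbsDensity hlam.ne' hint
end

section
/- Let λ > 0, G > 0 and h ∈ ℝ. For all μ ∈ ℝ and σ > 0, 2 h μ + G (μ² + σ²) − (λ/2) ln(2πσ²) − λ/2 ≥ −h²/G + (λ/2) ln(G/(πλ)), with equality if and only if μ = −h/G and σ² = λ/(2G). -/
/-!
The objective splits into `2hμ + Gμ²`, a function of the mean, and `a x - c log x`, a function of
`x = 2πσ²`, with `a = G / 2π` and `c = λ/2`. Completing the square minimizes the first part; the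
second reduces to `log t ≤ t - 1` at `t = a x / c`. The sum attains its bound exactly when both
parts attain theirs.
-/

section Quadratic

variable {K : Type*} [Field K] {a : K}

theorem two_mul_add_mul_sq_eq (ha : a ≠ 0) (b x : K) :
    2 * b * x + a * x ^ 2 = a * (x + b / a) ^ 2 + -b ^ 2 / a := by
  field_simp
  ring

theorem neg_sq_div_eq_two_mul_add_mul_sq_iff (ha : a ≠ 0) (b x : K) :
    -b ^ 2 / a = 2 * b * x + a * x ^ 2 ↔ x = -b / a := by
  rw [two_mul_add_mul_sq_eq ha, right_eq_add, mul_eq_zero_iff_left ha, sq_eq_zero_iff,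
    add_eq_zero_iff_eq_neg, neg_div]

theorem neg_sq_div_le_two_mul_add_mul_sq [LinearOrder K] [IsStrictOrderedRing K] (ha : 0 < a)
    (b x : K) : -b ^ 2 / a ≤ 2 * b * x + a * x ^ 2 := by
  rw [two_mul_add_mul_sq_eq ha.ne']
  exact le_add_of_nonneg_left (by positivity)

end Quadratic

section LinearSubLog

open Real

theorem log_eq_sub_one_iff_of_pos {x : ℝ} (hx : 0 < x) : log x = x - 1 ↔ x = 1 := by
  refine ⟨fun h ↦ ?_, fun h ↦ by simp [h]⟩
  by_contra hne
  exact (log_lt_sub_one_of_pos hx hne).ne h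

variable {a c x : ℝ}

theorem mul_sub_mul_log_eq (ha : a ≠ 0) (hc : c ≠ 0) (hx : x ≠ 0) :
    a * x - c * log x = c * (a * x / c - 1 - log (a * x / c)) + c * (1 + log (a / c)) := by
  have log_split : log (a * x / c) = log (a / c) + log x := by
    rw [mul_div_right_comm, log_mul (div_ne_zero ha hc) hx]
  rw [log_split]
  field_simp
  ring

theorem mul_one_add_log_div_le_mul_sub_mul_log (ha : 0 < a) (hc : 0 < c) (hx : 0 < x) :
    c * (1 + log (a / c)) ≤ a * x - c * log x := by
  rw [mul_sub_mul_log_eq ha.ne' hc.ne' hx.ne']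
  have log_le : log (a * x / c) ≤ a * x / c - 1 := log_le_sub_one_of_pos (by positivity)
  exact le_add_of_nonneg_left (mul_nonneg hc.le (sub_nonneg.mpr log_le))

theorem mul_one_add_log_div_eq_mul_sub_mul_log_iff (ha : 0 < a) (hc : 0 < c) (hx : 0 < x) :
    c * (1 + log (a / c)) = a * x - c * log x ↔ x = c / a := by
  rw [mul_sub_mul_log_eq ha.ne' hc.ne' hx.ne', right_eq_add, mul_eq_zero_iff_left hc.ne',
    sub_eq_zero, eq_comm, log_eq_sub_one_iff_of_pos (by positivity), div_eq_one_iff_eq hc.ne',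
    eq_div_iff ha.ne', mul_comm]

end LinearSubLog

/-- Within the Gaussian family `N(μ, σ²)`, the entropy-regularized quadratic objective
`2hμ + G(μ² + σ²) − (λ/2)ln(2πσ²) − λ/2` is bounded below by
`−h²/G + (λ/2)ln(G/(πλ))`, with equality iff `μ = −h/G` and `σ² = λ/(2G)`. -/
theorem stmt_7 (lam G h : ℝ) (hlam : 0 < lam) (hG : 0 < G) :
    ∀ μ σ : ℝ, 0 < σ →
      (2 * h * μ + G * (μ ^ 2 + σ ^ 2)
            - (lam / 2) * Real.log (2 * Real.pi * σ ^ 2) - lam / 2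
          ≥ -h ^ 2 / G + (lam / 2) * Real.log (G / (Real.pi * lam)))
      ∧ (2 * h * μ + G * (μ ^ 2 + σ ^ 2)
              - (lam / 2) * Real.log (2 * Real.pi * σ ^ 2) - lam / 2
            = -h ^ 2 / G + (lam / 2) * Real.log (G / (Real.pi * lam))
          ↔ μ = -h / G ∧ σ ^ 2 = lam / (2 * G)) := by
  intro μ σ hσ
  have ha : 0 < G / (2 * Real.pi) := by positivity
  have hc : 0 < lam / 2 := by positivity
  have hx : 0 < 2 * Real.pi * σ ^ 2 := by positivity
  have mean_le := neg_sq_div_le_two_mul_add_mul_sq hG h μ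
  have variance_le := mul_one_add_log_div_le_mul_sub_mul_log ha hc hx
  have objective_eq : 2 * h * μ + G * (μ ^ 2 + σ ^ 2)
        - (lam / 2) * Real.log (2 * Real.pi * σ ^ 2) - lam / 2
      = (2 * h * μ + G * μ ^ 2) + (G / (2 * Real.pi) * (2 * Real.pi * σ ^ 2)
        - (lam / 2) * Real.log (2 * Real.pi * σ ^ 2)) - lam / 2 := by
    field_simp
    ring
  have bound_eq : -h ^ 2 / G + (lam / 2) * Real.log (G / (Real.pi * lam))
      = -h ^ 2 / G + (lam / 2) * (1 + Real.log (G / (2 * Real.pi) / (lam / 2))) - lam / 2 := by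
    rw [show G / (2 * Real.pi) / (lam / 2) = G / (Real.pi * lam) by field_simp]
    ring
  have variance_iff : 2 * Real.pi * σ ^ 2 = lam / 2 / (G / (2 * Real.pi)) ↔
      σ ^ 2 = lam / (2 * G) := by
    field_simp
  rw [objective_eq, bound_eq, ge_iff_le, sub_le_sub_iff_right, sub_left_inj, eq_comm,
    add_eq_add_iff_eq_and_eq mean_le variance_le, neg_sq_div_eq_two_mul_add_mul_sq_iff hG.ne',
    mul_one_add_log_div_eq_mul_sub_mul_log_iff ha hc hx, variance_iff]
  exact ⟨add_le_add mean_le variance_le, Iff.rfl⟩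
end

section
/- In the backward Riccati recursion context, for every t with 0 ≤ t ≤ T one has (P_t)₁₁ = r^{T−t}, and for every t with 0 ≤ t ≤ T−1 one has G_t = (B² + D²) r^{T−t−1}. -/
open Matrix

/-!
The top-left entries of the `P t` obey a recursion of their own: writing `x = P (t + 1) 0 0`, the
gain contributes `((A B + C D) x)² / ((B² + D²) x)`, which is again linear in `x`, so one backward
step is multiplication by `r`. As `r ≠ 0`, these entries never vanish and no step divides by zero.
-/

section GeometricSequence

variable {M : Type*} [MonoidWithZero M] [NoZeroDivisors M]

lemma eq_pow_sub_mul_of_eq_mul_succ {x : ℕ → M} {r : M} {T t : ℕ} (hr : r ≠ 0) (hxT : x T ≠ 0)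
    (hx : ∀ t < T, x (t + 1) ≠ 0 → x t = r * x (t + 1)) (ht : t ≤ T) :
    x t = r ^ (T - t) * x T := by
  induction ht using Nat.decreasingInduction with
  | self => simp
  | of_succ t ht ih =>
    have hx_succ : x (t + 1) ≠ 0 := ih ▸ mul_ne_zero (pow_ne_zero _ hr) hxT
    have h_exp : T - t = T - (t + 1) + 1 := by omega
    rw [hx t ht hx_succ, ih, h_exp, pow_succ', mul_assoc]

end GeometricSequence

section Riccati

variable {K : Type*} [Field K]

/-- One backward step `P_{t+1} ↦ P_t = F_t - (1/G_t) H_t H_tᵀ` of the Riccati recursion with scalar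
control, applied to `Q = P_{t+1}`. The paper's indices `1, 2` are `0, 1` here. -/
def riccatiStep (A B C D Abar Cbar ρ : K) (Q : Matrix (Fin 2) (Fin 2) K) :
    Matrix (Fin 2) (Fin 2) K :=
  let F := !![(A ^ 2 + C ^ 2) * Q 0 0, (A * Abar + C * Cbar) * Q 0 1;
              (A * Abar + C * Cbar) * Q 0 1, (Abar ^ 2 + Cbar ^ 2) * Q 1 1]
  let G := (B ^ 2 + D ^ 2) * Q 0 0
  let H := ![(A * B + C * D) * Q 0 0, (Abar * B + ρ * Cbar * D) * Q 1 0]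
  F - (1 / G) • vecMulVec H H

lemma riccatiStep_apply_zero_zero {A B C D : K} (Abar Cbar ρ : K) {Q : Matrix (Fin 2) (Fin 2) K}
    (hG : (B ^ 2 + D ^ 2) * Q 0 0 ≠ 0) :
    riccatiStep A B C D Abar Cbar ρ Q 0 0 =
      (A ^ 2 + C ^ 2 - (A * B + C * D) ^ 2 / (B ^ 2 + D ^ 2)) * Q 0 0 := by
  obtain ⟨hBD, hQ⟩ := mul_ne_zero_iff.mp hG
  calc riccatiStep A B C D Abar Cbar ρ Q 0 0
    _ = (A ^ 2 + C ^ 2) * Q 0 0 -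
          1 / ((B ^ 2 + D ^ 2) * Q 0 0) * (((A * B + C * D) * Q 0 0) * ((A * B + C * D) * Q 0 0)) :=
      rfl
    _ = (A ^ 2 + C ^ 2 - (A * B + C * D) ^ 2 / (B ^ 2 + D ^ 2)) * Q 0 0 := by
      field_simp

theorem stmt_10_general (T : ℕ) (A B C D Abar Cbar ρ r : K)
    (hBD : B ^ 2 + D ^ 2 ≠ 0)
    (hr : r = A ^ 2 + C ^ 2 - (A * B + C * D) ^ 2 / (B ^ 2 + D ^ 2))
    (hr_ne : r ≠ 0)
    (P : ℕ → Matrix (Fin 2) (Fin 2) K)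
    (hPT : P T 0 0 ≠ 0)
    (hrec : ∀ t, t < T → P t = riccatiStep A B C D Abar Cbar ρ (P (t + 1))) :
    (∀ t, t ≤ T → P t 0 0 = r ^ (T - t) * P T 0 0)
    ∧ (∀ t, t < T →
        (B ^ 2 + D ^ 2) * P (t + 1) 0 0 =
          (B ^ 2 + D ^ 2) * (r ^ (T - t - 1) * P T 0 0)) := by
  have h_step (t : ℕ) (ht : t < T) (hP : P (t + 1) 0 0 ≠ 0) : P t 0 0 = r * P (t + 1) 0 0 := by
    rw [hrec t ht, riccatiStep_apply_zero_zero Abar Cbar ρ (mul_ne_zero hBD hP), hr]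
  have h_entry (t : ℕ) (ht : t ≤ T) : P t 0 0 = r ^ (T - t) * P T 0 0 :=
    eq_pow_sub_mul_of_eq_mul_succ (x := fun t ↦ P t 0 0) hr_ne hPT h_step ht
  exact ⟨h_entry, fun t ht ↦ by rw [h_entry (t + 1) ht, Nat.sub_sub]⟩

end Riccati

/-- In the backward Riccati recursion `P_T = [[1,−1],[−1,1]]`,
`P_t = F_t − (1/G_t) H_t H_tᵀ` (with `F_t`, `H_t`, `G_t` built from `P_{t+1}`),
one has `(P_t)₁₁ = r^{T−t}` for all `0 ≤ t ≤ T` and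
`G_t = (B² + D²) r^{T−t−1}` for all `0 ≤ t ≤ T−1`, where
`r = A² + C² − (AB + CD)²/(B² + D²) > 0`. -/
theorem stmt_10 (T : ℕ) (A B C D Abar Cbar ρ r : ℝ)
    (hBD : 0 < B ^ 2 + D ^ 2)
    (hr : r = A ^ 2 + C ^ 2 - (A * B + C * D) ^ 2 / (B ^ 2 + D ^ 2))
    (hrpos : 0 < r)
    (P : ℕ → Matrix (Fin 2) (Fin 2) ℝ)
    (hPT : P T = !![1, -1; -1, 1])
    (hrec : ∀ t, t < T →
      P t = !![(A ^ 2 + C ^ 2) * P (t + 1) 0 0,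
               (A * Abar + C * Cbar) * P (t + 1) 0 1;
               (A * Abar + C * Cbar) * P (t + 1) 0 1,
               (Abar ^ 2 + Cbar ^ 2) * P (t + 1) 1 1]
            - (1 / ((B ^ 2 + D ^ 2) * P (t + 1) 0 0)) •
                vecMulVec
                  ![(A * B + C * D) * P (t + 1) 0 0,
                    (Abar * B + ρ * Cbar * D) * P (t + 1) 1 0]
                  ![(A * B + C * D) * P (t + 1) 0 0,
                    (Abar * B + ρ * Cbar * D) * P (t + 1) 1 0]) :
    (∀ t, t ≤ T → P t 0 0 = r ^ (T - t))
    ∧ (∀ t, t < T →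
        (B ^ 2 + D ^ 2) * P (t + 1) 0 0 = (B ^ 2 + D ^ 2) * r ^ (T - t - 1)) := by
  simpa [hPT] using stmt_10_general T A B C D Abar Cbar ρ r hBD.ne' hr hrpos.ne' P
    (by simp [hPT]) hrec
end

section
/- In the backward Riccati recursion context, for every t with 0 ≤ t ≤ T−1 the optimal feedback coefficient vector satisfies (1/G_t) H_t = ((AB + CD)/(B² + D²), −(q/r)^{T−t−1} (ĀB + ρC̄D)/(B² + D²)); in particular the ratio g_t := (P_{t+1})₂₁/(P_{t+1})₁₁ equals −(q/r)^{T−t−1}. -/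
open Matrix

/-!
One backward step multiplies the corner entry `P₁₁` by `r`, and, as long as `P` is symmetric with
`P₁₁ ≠ 0`, multiplies the off-diagonal entry by `q`: the factor `P₁₁` in `G` cancels against the
one in `H`. The recursion thus decouples into two geometric progressions whose ratio grows by
`q / r` at every step, and the feedback vector depends on `P` only through this ratio.
-/

/-- The scalar data of the backward Riccati recursion: the multipliers of the entries of
`P_{t+1}` in `F_t` (`f₁₁`, `f₁₂`, `f₂₂`), `G_t` (`g`) and `H_t` (`h₁`, `h₂`). In the paper,
`g = B² + D²`, `h₁ = AB + CD` and `h₂ = ĀB + ρC̄D`. -/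
structure RiccatiCoeffs (K : Type*) [Field K] where
  (f₁₁ f₁₂ f₂₂ g h₁ h₂ : K)
  g_ne_zero : g ≠ 0

namespace RiccatiCoeffs

variable {K : Type*} [Field K] (c : RiccatiCoeffs K)

/-- The ratio of consecutive corner entries `P₁₁`. -/
def r : K := c.f₁₁ - c.h₁ ^ 2 / c.g

/-- The ratio of consecutive off-diagonal entries `P₂₁`. -/
def q : K := c.f₁₂ - c.h₂ * c.h₁ / c.g

/-- The part of a Riccati step that does not involve the control; both off-diagonal entries are
read off `P₁₂`, as in the paper. -/
def F (P : Matrix (Fin 2) (Fin 2) K) : Matrix (Fin 2) (Fin 2) K :=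
  !![c.f₁₁ * P 0 0, c.f₁₂ * P 0 1; c.f₁₂ * P 0 1, c.f₂₂ * P 1 1]

/-- The coefficient of the square of the control in the one-step cost. -/
def G (P : Matrix (Fin 2) (Fin 2) K) : K := c.g * P 0 0

/-- The vector coupling the control to the state in the one-step cost. -/
def H (P : Matrix (Fin 2) (Fin 2) K) : Fin 2 → K := ![c.h₁ * P 0 0, c.h₂ * P 1 0]

/-- The optimal feedback coefficients `(1/G) H`, without the minus sign of the policy mean. -/
def gain (P : Matrix (Fin 2) (Fin 2) K) : Fin 2 → K := (1 / c.G P) • c.H P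

/-- One backward step `P_{t+1} ↦ P_t` of the Riccati recursion. -/
def step (P : Matrix (Fin 2) (Fin 2) K) : Matrix (Fin 2) (Fin 2) K :=
  c.F P - (1 / c.G P) • vecMulVec (c.H P) (c.H P)

variable {P : Matrix (Fin 2) (Fin 2) K}

theorem G_ne_zero (h₀ : P 0 0 ≠ 0) : c.G P ≠ 0 :=
  mul_ne_zero c.g_ne_zero h₀

theorem gain_eq (h₀ : P 0 0 ≠ 0) :
    c.gain P = ![c.h₁ / c.g, P 1 0 / P 0 0 * c.h₂ / c.g] := by
  have hg := c.g_ne_zero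
  rw [gain, one_div, inv_smul_eq_iff₀ (c.G_ne_zero h₀)]
  ext i
  fin_cases i
  · change c.h₁ * P 0 0 = c.g * P 0 0 * (c.h₁ / c.g)
    field_simp
  · change c.h₂ * P 1 0 = c.g * P 0 0 * (P 1 0 / P 0 0 * c.h₂ / c.g)
    field_simp

theorem step_eq_sub_vecMulVec_gain : c.step P = c.F P - vecMulVec (c.gain P) (c.H P) := by
  rw [step, gain, smul_vecMulVec]

theorem isSymm_step : (c.step P).IsSymm := by
  have hF : (c.F P).IsSymm := by simp [F, IsSymm.ext_iff]
  have hH : (vecMulVec (c.H P) (c.H P)).IsSymm := transpose_vecMulVec _ _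
  exact hF.sub (hH.smul _)

theorem step_zero_zero : c.step P 0 0 = c.r * P 0 0 := by
  simp only [step, F, G, H, r, Matrix.sub_apply, Matrix.smul_apply, vecMulVec_apply, smul_eq_mul,
    of_apply, cons_val_zero]
  field_simp

theorem step_one_zero (hP : P.IsSymm) (h₀ : P 0 0 ≠ 0) : c.step P 1 0 = c.q * P 1 0 := by
  simp only [step_eq_sub_vecMulVec_gain, c.gain_eq h₀, Matrix.sub_apply, vecMulVec_apply, F, H, q,
    of_apply, cons_val_zero, cons_val_one, hP.apply 1 0]
  field_simp

theorem isSymm_iterate_step (hP : P.IsSymm) (k : ℕ) : (c.step^[k] P).IsSymm :=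
  Function.Iterate.rec (fun M : Matrix (Fin 2) (Fin 2) K ↦ M.IsSymm) hP
    (fun _ _ ↦ c.isSymm_step) k

theorem iterate_step_zero_zero (k : ℕ) : (c.step^[k] P) 0 0 = c.r ^ k * P 0 0 := by
  induction k with
  | zero => simp
  | succ k ih =>
    rw [Function.iterate_succ_apply', step_zero_zero, ih, pow_succ', mul_assoc]

theorem iterate_step_zero_zero_ne_zero (hr : c.r ≠ 0) (h₀ : P 0 0 ≠ 0) (k : ℕ) :
    (c.step^[k] P) 0 0 ≠ 0 :=
  c.iterate_step_zero_zero k ▸ mul_ne_zero (pow_ne_zero k hr) h₀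

theorem iterate_step_one_zero (hP : P.IsSymm) (hr : c.r ≠ 0) (h₀ : P 0 0 ≠ 0) (k : ℕ) :
    (c.step^[k] P) 1 0 = c.q ^ k * P 1 0 := by
  induction k with
  | zero => simp
  | succ k ih =>
    rw [Function.iterate_succ_apply', c.step_one_zero (c.isSymm_iterate_step hP k)
      (c.iterate_step_zero_zero_ne_zero hr h₀ k), ih, pow_succ', mul_assoc]

theorem iterate_step_one_zero_div_zero_zero (hP : P.IsSymm) (hr : c.r ≠ 0) (h₀ : P 0 0 ≠ 0)
    (k : ℕ) :
    (c.step^[k] P) 1 0 / (c.step^[k] P) 0 0 = (c.q / c.r) ^ k * (P 1 0 / P 0 0) := by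
  rw [c.iterate_step_one_zero hP hr h₀, iterate_step_zero_zero, mul_div_mul_comm, div_pow]

end RiccatiCoeffs

theorem eq_iterate_of_backward_recursion {α : Type*} {f : α → α} {u : ℕ → α} {T : ℕ}
    (hu : ∀ t, t < T → u t = f (u (t + 1))) {t : ℕ} (ht : t ≤ T) : u t = f^[T - t] (u T) := by
  induction ht using Nat.decreasingInduction with
  | self => simp
  | of_succ t ht ih =>
    rw [hu t ht, ih, ← Function.iterate_succ_apply' f, Nat.succ_eq_add_one]
    congr 2
    lia

theorem stmt_13_general {K : Type*} [Field K] (c : RiccatiCoeffs K) (hr : c.r ≠ 0) (T : ℕ)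
    (P : ℕ → Matrix (Fin 2) (Fin 2) K) (hPT : (P T).IsSymm) (h₀ : P T 0 0 ≠ 0)
    (hrec : ∀ t, t < T → P t = c.step (P (t + 1))) (t : ℕ) (ht : t < T) :
    c.gain (P (t + 1)) =
        ![c.h₁ / c.g, (c.q / c.r) ^ (T - t - 1) * (P T 1 0 / P T 0 0) * c.h₂ / c.g] ∧
      P (t + 1) 1 0 / P (t + 1) 0 0 = (c.q / c.r) ^ (T - t - 1) * (P T 1 0 / P T 0 0) := by
  have hiter : P (t + 1) = c.step^[T - t - 1] (P T) :=
    eq_iterate_of_backward_recursion hrec ht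
  have hne : P (t + 1) 0 0 ≠ 0 := hiter ▸ c.iterate_step_zero_zero_ne_zero hr h₀ _
  have hratio : P (t + 1) 1 0 / P (t + 1) 0 0 =
      (c.q / c.r) ^ (T - t - 1) * (P T 1 0 / P T 0 0) :=
    hiter ▸ c.iterate_step_one_zero_div_zero_zero hPT hr h₀ _
  exact ⟨hratio ▸ c.gain_eq hne, hratio⟩

/-- In the backward Riccati recursion, the optimal feedback coefficient vector satisfies
`(1/G_t) H_t = ((AB + CD)/(B² + D²), −(q/r)^{T−t−1}(ĀB + ρC̄D)/(B² + D²))` for every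
`0 ≤ t ≤ T−1`; in particular `g_t := (P_{t+1})₂₁/(P_{t+1})₁₁ = −(q/r)^{T−t−1}`. -/
theorem stmt_13 (T : ℕ) (A B C D Abar Cbar ρ r q : ℝ)
    (hBD : 0 < B ^ 2 + D ^ 2)
    (hr : r = A ^ 2 + C ^ 2 - (A * B + C * D) ^ 2 / (B ^ 2 + D ^ 2))
    (hrpos : 0 < r)
    (hq : q = A * Abar + C * Cbar
            - (Abar * B + ρ * Cbar * D) * (A * B + C * D) / (B ^ 2 + D ^ 2))
    (P : ℕ → Matrix (Fin 2) (Fin 2) ℝ)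
    (hPT : P T = !![1, -1; -1, 1])
    (hrec : ∀ t, t < T →
      P t = !![(A ^ 2 + C ^ 2) * P (t + 1) 0 0,
               (A * Abar + C * Cbar) * P (t + 1) 0 1;
               (A * Abar + C * Cbar) * P (t + 1) 0 1,
               (Abar ^ 2 + Cbar ^ 2) * P (t + 1) 1 1]
            - (1 / ((B ^ 2 + D ^ 2) * P (t + 1) 0 0)) •
                vecMulVec
                  ![(A * B + C * D) * P (t + 1) 0 0,
                    (Abar * B + ρ * Cbar * D) * P (t + 1) 1 0]
                  ![(A * B + C * D) * P (t + 1) 0 0,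
                    (Abar * B + ρ * Cbar * D) * P (t + 1) 1 0]) :
    ∀ t, t < T →
      ((1 / ((B ^ 2 + D ^ 2) * P (t + 1) 0 0)) •
          ![(A * B + C * D) * P (t + 1) 0 0,
            (Abar * B + ρ * Cbar * D) * P (t + 1) 1 0]
        = ![(A * B + C * D) / (B ^ 2 + D ^ 2),
            -(q / r) ^ (T - t - 1) * (Abar * B + ρ * Cbar * D) / (B ^ 2 + D ^ 2)])
      ∧ P (t + 1) 1 0 / P (t + 1) 0 0 = -(q / r) ^ (T - t - 1) := by
  subst hr hq
  let c : RiccatiCoeffs ℝ :=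
    ⟨A ^ 2 + C ^ 2, A * Abar + C * Cbar, Abar ^ 2 + Cbar ^ 2, B ^ 2 + D ^ 2, A * B + C * D,
      Abar * B + ρ * Cbar * D, hBD.ne'⟩
  have hsymm : (P T).IsSymm := by simp [hPT, IsSymm.ext_iff]
  have h₀ : P T 0 0 ≠ 0 := by simp [hPT]
  have hratio : P T 1 0 / P T 0 0 = -1 := by simp [hPT]
  intro t ht
  have hfeedback := stmt_13_general c hrpos.ne' T P hsymm h₀ hrec t ht
  rwa [hratio, mul_neg_one] at hfeedback
end

section
/- Assume C = 0, A ≠ 0, D ≠ 0 and B² + D² > 0, so that r = A²D²/(B² + D²) > 0, and let λ > 0. Define V(t, x, y) = (x, y) P_t (x, y)ᵀ + (λ/2) Σ_{k=t}^{T−1} ln(G_k/(πλ)) for 0 ≤ t ≤ T and (x, y) ∈ ℝ². Then V(T, x, y) = (x − y)², and for every t < T, every (x, y) ∈ ℝ², every probability density π on ℝ with ∫u²π(u)du < ∞ and ∫π|ln π| < ∞, and every random variable u with density π independent of the noise pair (w_x, w_y), setting X₁ = A x + B u + D u w_x and Y₁ = Ā y + C̄ y w_y one has E[V(t+1, X₁,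 Y₁)] + λ ∫_ℝ π(u) ln π(u) du ≥ V(t, x, y), with equality when π is the density of N(−(H_t · (x, y))/G_t, λ/(2G_t)). -/
open MeasureTheory ProbabilityTheory Matrix

/-- The density of the one-dimensional normal distribution `N(m, v)` (mean `m`,
variance `v`). -/
noncomputable def gaussianDensity (m v : ℝ) : ℝ → ℝ := fun u =>
  (Real.sqrt (2 * Real.pi * v))⁻¹ * Real.exp (-(u - m) ^ 2 / (2 * v))

/-!
Under `C = 0` the expected next cost is a quadratic polynomial in the control: completing the
square around `m = -(H_t · (x, y)) / G_t` turns it into `(x, y) P_t (x, y)ᵀ + G_t E[(u - m)²]`, the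
first term being exactly the Riccati step. What remains is to minimise
`G ∫ (v - m)² p(v) dv + λ ∫ p ln p` over densities `p`. Since `G (v - m)²` is, up to a constant,
`-λ ln q(v)` with `q` the density of `N(m, λ / (2G))`, Gibbs' inequality gives the minimum
`(λ / 2) ln (G / (π λ))`, attained at `p = q`; this is the new summand of `V`.
-/

section Entropy

/-- **Gibbs' inequality**, obtained by integrating `g * klFun (f / g) ≥ 0`. -/
theorem integral_mul_log_le_integral_mul_log {α : Type*} [MeasurableSpace α] {ν : Measure α}
    {f g : α → ℝ} (hf0 : ∀ᵐ a ∂ν, 0 ≤ f a) (hg0 : ∀ᵐ a ∂ν, 0 < g a)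
    (hf : Integrable f ν) (hg : Integrable g ν) (hgf : ∫ a, g a ∂ν ≤ ∫ a, f a ∂ν)
    (hfg : Integrable (fun a => f a * Real.log (g a)) ν)
    (hff : Integrable (fun a => f a * Real.log (f a)) ν) :
    ∫ a, f a * Real.log (g a) ∂ν ≤ ∫ a, f a * Real.log (f a) ∂ν := by
  have hpointwise : ∀ᵐ a ∂ν,
      f a * Real.log (g a) + (f a - g a) ≤ f a * Real.log (f a) := by
    filter_upwards [hf0, hg0] with a hfa hga
    have hkl := mul_nonneg hga.le (InformationTheory.klFun_nonneg (div_nonneg hfa hga.le))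
    have hexpand : g a * InformationTheory.klFun (f a / g a)
        = f a * Real.log (f a) - f a * Real.log (g a) + g a - f a := by
      rcases hfa.eq_or_lt with hfa | hfa
      · simp [← hfa, InformationTheory.klFun_zero]
      · rw [InformationTheory.klFun_apply, Real.log_div hfa.ne' hga.ne']
        field_simp
    linarith
  have hsub : Integrable (fun a => f a - g a) ν := hf.sub hg
  have hintegral := integral_mono_ae (hfg.add hsub) hff hpointwise
  simp only [Pi.add_apply] at hintegral
  rw [integral_add hfg hsub, integral_sub hf hg] at hintegral
  linarith

theorem gaussianDensity_eq_gaussianPDFReal (m : ℝ) (v : NNReal) :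
    gaussianDensity m v = gaussianPDFReal m v := rfl

theorem gaussianDensity_pos (m : ℝ) {v : ℝ} (hv : 0 < v) (a : ℝ) : 0 < gaussianDensity m v a := by
  unfold gaussianDensity
  positivity

theorem integrable_gaussianDensity (m : ℝ) {v : ℝ} (hv : 0 ≤ v) :
    Integrable (gaussianDensity m v) := by
  lift v to NNReal using hv
  rw [gaussianDensity_eq_gaussianPDFReal]
  exact integrable_gaussianPDFReal m v

theorem integral_gaussianDensity (m : ℝ) {v : ℝ} (hv : 0 < v) : ∫ a, gaussianDensity m v a = 1 := by
  lift v to NNReal using hv.le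
  rw [gaussianDensity_eq_gaussianPDFReal]
  exact integral_gaussianPDFReal_eq_one m (by exact_mod_cast hv.ne')

theorem log_gaussianDensity (m : ℝ) {v : ℝ} (hv : 0 < v) (a : ℝ) :
    Real.log (gaussianDensity m v a)
      = -(1 / 2) * Real.log (2 * Real.pi * v) - (2 * v)⁻¹ * (a - m) ^ 2 := by
  rw [gaussianDensity, Real.log_mul (by positivity) (by positivity), Real.log_exp, Real.log_inv,
    Real.log_sqrt (by positivity)]
  ring

variable {p : ℝ → ℝ} {m v G lam : ℝ}

theorem integrable_mul_log_gaussianDensity (hp : Integrable p)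
    (hp2 : Integrable fun a => (a - m) ^ 2 * p a) (hv : 0 < v) :
    Integrable fun a => p a * Real.log (gaussianDensity m v a) := by
  convert (hp.const_mul (-(1 / 2) * Real.log (2 * Real.pi * v))).sub
    (hp2.const_mul (2 * v)⁻¹) using 2 with a
  rw [log_gaussianDensity m hv, Pi.sub_apply]
  ring

theorem integral_mul_log_gaussianDensity (hp1 : ∫ a, p a = 1)
    (hp2 : Integrable fun a => (a - m) ^ 2 * p a) (hv : 0 < v) :
    ∫ a, p a * Real.log (gaussianDensity m v a)
      = -(1 / 2) * Real.log (2 * Real.pi * v) - (2 * v)⁻¹ * ∫ a, (a - m) ^ 2 * p a := by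
  have hp := integrable_of_integral_eq_one hp1
  calc ∫ a, p a * Real.log (gaussianDensity m v a)
      = ∫ a, (-(1 / 2) * Real.log (2 * Real.pi * v) * p a
          - (2 * v)⁻¹ * ((a - m) ^ 2 * p a)) := by
        congr with a
        rw [log_gaussianDensity m hv]
        ring
    _ = _ := by
        rw [integral_sub (hp.const_mul _) (hp2.const_mul _), integral_const_mul,
          integral_const_mul, hp1, mul_one]

theorem integral_sq_sub_mul_add_integral_mul_log_gaussianDensity (hG : 0 < G) (hlam : 0 < lam)
    (hp1 : ∫ a, p a = 1) (hp2 : Integrable fun a => (a - m) ^ 2 * p a) :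
    G * (∫ a, (a - m) ^ 2 * p a)
        + lam * ∫ a, p a * Real.log (gaussianDensity m (lam / (2 * G)) a)
      = lam / 2 * Real.log (G / (Real.pi * lam)) := by
  have hlog : Real.log (2 * Real.pi * (lam / (2 * G))) = -Real.log (G / (Real.pi * lam)) := by
    rw [← Real.log_inv, inv_div]
    congr 1
    field_simp
  rw [integral_mul_log_gaussianDensity hp1 hp2 (by positivity), hlog]
  field_simp
  ring

theorem le_integral_sq_sub_mul_add_integral_mul_log (hG : 0 < G) (hlam : 0 < lam)
    (hp0 : ∀ᵐ a, 0 ≤ p a) (hp1 : ∫ a, p a = 1) (hp2 : Integrable fun a => (a - m) ^ 2 * p a)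
    (hplog : Integrable fun a => p a * Real.log (p a)) :
    lam / 2 * Real.log (G / (Real.pi * lam))
      ≤ G * (∫ a, (a - m) ^ 2 * p a) + lam * ∫ a, p a * Real.log (p a) := by
  have hv : 0 < lam / (2 * G) := by positivity
  have hp := integrable_of_integral_eq_one hp1
  have hgibbs : ∫ a, p a * Real.log (gaussianDensity m (lam / (2 * G)) a)
      ≤ ∫ a, p a * Real.log (p a) :=
    integral_mul_log_le_integral_mul_log hp0 (.of_forall (gaussianDensity_pos m hv)) hp
      (integrable_gaussianDensity m hv.le) (by rw [integral_gaussianDensity m hv, hp1])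
      (integrable_mul_log_gaussianDensity hp hp2 hv) hplog
  rw [← integral_sq_sub_mul_add_integral_mul_log_gaussianDensity hG hlam hp1 hp2]
  exact add_le_add le_rfl (mul_le_mul_of_nonneg_left hgibbs hlam.le)

end Entropy

section Density

variable {Ω α : Type*} [MeasurableSpace Ω] [MeasurableSpace α] {μ : Measure Ω} {ν : Measure α}
  {E : Type*} [NormedAddCommGroup E] [NormedSpace ℝ E] {p : α → ℝ} {u : Ω → α} {f : α → E}

theorem integrable_comp_iff_of_map_eq_withDensity (hp : AEMeasurable p ν) (hp0 : ∀ᵐ a ∂ν, 0 ≤ p a)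
    (hu : AEMeasurable u μ) (hmap : μ.map u = ν.withDensity fun a => ENNReal.ofReal (p a))
    (hf : AEStronglyMeasurable f (μ.map u)) :
    Integrable (fun ω => f (u ω)) μ ↔ Integrable (fun a => p a • f a) ν := by
  rw [show (fun ω => f (u ω)) = f ∘ u from rfl, ← integrable_map_measure hf hu, hmap,
    integrable_withDensity_iff_integrable_smul₀' hp.ennreal_ofReal (by simp)]
  refine integrable_congr ?_
  filter_upwards [hp0] with a ha
  rw [ENNReal.toReal_ofReal ha]

theorem integral_comp_of_map_eq_withDensity (hp : AEMeasurable p ν) (hp0 : ∀ᵐ a ∂ν, 0 ≤ p a)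
    (hu : AEMeasurable u μ) (hmap : μ.map u = ν.withDensity fun a => ENNReal.ofReal (p a))
    (hf : AEStronglyMeasurable f (μ.map u)) :
    ∫ ω, f (u ω) ∂μ = ∫ a, p a • f a ∂ν := by
  rw [← integral_map hu hf, hmap,
    integral_withDensity_eq_integral_toReal_smul₀ hp.ennreal_ofReal (by simp)]
  refine integral_congr_ae ?_
  filter_upwards [hp0] with a ha
  rw [ENNReal.toReal_ofReal ha]

end Density

section DensityMoments

variable {Ω : Type*} [MeasurableSpace Ω] {μ : Measure Ω} {ν : Measure ℝ} {p : ℝ → ℝ} {u : Ω → ℝ}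

theorem memLp_two_of_map_eq_withDensity (hp : AEMeasurable p ν) (hp0 : ∀ᵐ v ∂ν, 0 ≤ p v)
    (hu : AEMeasurable u μ) (hmap : μ.map u = ν.withDensity fun v => ENNReal.ofReal (p v))
    (hp2 : Integrable (fun v => v ^ 2 * p v) ν) : MemLp u 2 μ := by
  refine (memLp_two_iff_integrable_sq hu.aestronglyMeasurable).2 ?_
  rw [integrable_comp_iff_of_map_eq_withDensity (f := fun v : ℝ => v ^ 2) hp hp0 hu hmap
    (by fun_prop)]
  simpa only [smul_eq_mul, mul_comm] using hp2

theorem integrable_sq_sub_mul_of_map_eq_withDensity [IsFiniteMeasure μ] (hp : AEMeasurable p ν)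
    (hp0 : ∀ᵐ v ∂ν, 0 ≤ p v) (hu : MemLp u 2 μ)
    (hmap : μ.map u = ν.withDensity fun v => ENNReal.ofReal (p v)) (m : ℝ) :
    Integrable (fun v => (v - m) ^ 2 * p v) ν := by
  have hsq := (hu.sub (memLp_const m)).integrable_sq
  simp only [Pi.sub_apply] at hsq
  rw [integrable_comp_iff_of_map_eq_withDensity (f := fun v : ℝ => (v - m) ^ 2) hp hp0
    hu.1.aemeasurable hmap (by fun_prop)] at hsq
  simpa only [smul_eq_mul, mul_comm] using hsq

end DensityMoments

section SecondMoments

variable {Ω : Type*} [MeasurableSpace Ω] {μ : Measure Ω} {X Y : Ω → ℝ}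

theorem memLp_two_mul_of_indepFun (hX : MemLp X 2 μ) (hY : MemLp Y 2 μ) (hXY : IndepFun X Y μ) :
    MemLp (fun ω => X ω * Y ω) 2 μ := by
  refine (memLp_two_iff_integrable_sq (hX.1.mul hY.1)).2 ?_
  have hsq : IndepFun (fun ω => X ω ^ 2) (fun ω => Y ω ^ 2) μ :=
    hXY.comp (φ := fun a : ℝ => a ^ 2) (ψ := fun a : ℝ => a ^ 2) (by fun_prop) (by fun_prop)
  simpa only [Pi.mul_def, mul_pow] using hsq.integrable_mul hX.integrable_sq hY.integrable_sq

theorem integral_affine [IsProbabilityMeasure μ] (hX : Integrable X μ) (a b : ℝ) :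
    ∫ ω, (a + b * X ω) ∂μ = a + b * ∫ ω, X ω ∂μ := by
  rw [integral_add (integrable_const a) (hX.const_mul b), integral_const_mul]
  simp

theorem memLp_affine [IsFiniteMeasure μ] {q : ENNReal} (hX : MemLp X q μ) (a b : ℝ) :
    MemLp (fun ω => a + b * X ω) q μ :=
  (memLp_const a).add (hX.const_mul b)

theorem integral_affine_mul_affine [IsProbabilityMeasure μ] (hX : MemLp X 2 μ) (hY : MemLp Y 2 μ)
    (a b c d : ℝ) :
    ∫ ω, (a + b * X ω) * (c + d * Y ω) ∂μ
      = a * c + a * d * (∫ ω, Y ω ∂μ) + b * c * (∫ ω, X ω ∂μ) + b * d * ∫ ω, X ω * Y ω ∂μ := by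
  have hX1 := hX.integrable one_le_two
  have hY1 := hY.integrable one_le_two
  have hXY : Integrable (fun ω => X ω * Y ω) μ := hX.integrable_mul hY
  calc ∫ ω, (a + b * X ω) * (c + d * Y ω) ∂μ
      = ∫ ω, (a * c + a * d * Y ω + b * c * X ω + b * d * (X ω * Y ω)) ∂μ := by
        congr with ω
        ring
    _ = _ := by
        rw [integral_add (by fun_prop) (by fun_prop), integral_add (by fun_prop) (by fun_prop),
          integral_add (by fun_prop) (by fun_prop)]
        simp [integral_const_mul]

theorem integral_sq_affine [IsProbabilityMeasure μ] (hX : MemLp X 2 μ) (a b : ℝ) :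
    ∫ ω, (a + b * X ω) ^ 2 ∂μ
      = a ^ 2 + 2 * a * b * (∫ ω, X ω ∂μ) + b ^ 2 * ∫ ω, X ω ^ 2 ∂μ := by
  simp only [sq, integral_affine_mul_affine hX hX]
  ring

end SecondMoments

section QuadraticForm

theorem vec2_dotProduct_mulVec {R : Type*} [CommRing R] (Q : Matrix (Fin 2) (Fin 2) R) (x y : R) :
    ![x, y] ⬝ᵥ (Q *ᵥ ![x, y]) = Q 0 0 * x ^ 2 + (Q 0 1 + Q 1 0) * (x * y) + Q 1 1 * y ^ 2 := by
  simp only [mulVec, dotProduct, Fin.sum_univ_two, cons_val_zero, cons_val_one]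
  ring

theorem dotProduct_sub_smul_vecMulVec_mulVec {n R : Type*} [Fintype n] [CommRing R]
    (F : Matrix n n R) (c : R) (h z : n → R) :
    z ⬝ᵥ ((F - c • vecMulVec h h) *ᵥ z) = z ⬝ᵥ (F *ᵥ z) - c * (h ⬝ᵥ z) ^ 2 := by
  rw [sub_mulVec, smul_mulVec, vecMulVec_mulVec, dotProduct_sub, dotProduct_smul, op_smul_eq_smul,
    dotProduct_smul, dotProduct_comm z h, smul_eq_mul, smul_eq_mul, sq]

variable {Ω : Type*} [MeasurableSpace Ω] {μ : Measure Ω} {X Y : Ω → ℝ}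

theorem integrable_vec2_dotProduct_mulVec (hX : MemLp X 2 μ) (hY : MemLp Y 2 μ)
    (Q : Matrix (Fin 2) (Fin 2) ℝ) :
    Integrable (fun ω => ![X ω, Y ω] ⬝ᵥ (Q *ᵥ ![X ω, Y ω])) μ := by
  simp only [vec2_dotProduct_mulVec]
  exact ((hX.integrable_sq.const_mul _).add ((hX.integrable_mul hY).const_mul _)).add
    (hY.integrable_sq.const_mul _)

theorem integral_vec2_dotProduct_mulVec (hX : MemLp X 2 μ) (hY : MemLp Y 2 μ)
    (Q : Matrix (Fin 2) (Fin 2) ℝ) :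
    ∫ ω, ![X ω, Y ω] ⬝ᵥ (Q *ᵥ ![X ω, Y ω]) ∂μ
      = Q 0 0 * (∫ ω, X ω ^ 2 ∂μ) + (Q 0 1 + Q 1 0) * (∫ ω, X ω * Y ω ∂μ)
        + Q 1 1 * ∫ ω, Y ω ^ 2 ∂μ := by
  have hXX := hX.integrable_sq
  have hXY : Integrable (fun ω => X ω * Y ω) μ := hX.integrable_mul hY
  have hYY := hY.integrable_sq
  simp only [vec2_dotProduct_mulVec]
  rw [integral_add (by fun_prop) (by fun_prop), integral_add (by fun_prop) (by fun_prop)]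
  simp only [integral_const_mul]

end QuadraticForm

/-- The moment conditions on the noise pair: square integrable, centred, of unit variance, with
correlation `ρ`. -/
structure IsNormalizedNoise {Ω : Type*} [MeasurableSpace Ω] (wx wy : Ω → ℝ) (ρ : ℝ)
    (μ : Measure Ω) : Prop where
  memLp_fst : MemLp wx 2 μ
  memLp_snd : MemLp wy 2 μ
  integral_fst : ∫ ω, wx ω ∂μ = 0
  integral_snd : ∫ ω, wy ω ∂μ = 0
  integral_fst_sq : ∫ ω, wx ω ^ 2 ∂μ = 1
  integral_snd_sq : ∫ ω, wy ω ^ 2 ∂μ = 1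
  integral_mul : ∫ ω, wx ω * wy ω ∂μ = ρ

/-- Coefficients of the asset-liability model with `C = 0`: `A`, `B`, `D` drive the wealth,
`Abar`, `Cbar` the liability, and `ρ` is the correlation of the two noises. -/
structure AssetLiabilityModel where
  (A B D Abar Cbar ρ : ℝ)

namespace AssetLiabilityModel

variable (M : AssetLiabilityModel)

/-- The wealth `X₁` after one period, from wealth `x`, under control `u` and noise `w`. -/
def nextWealth (x u w : ℝ) : ℝ := M.A * x + M.B * u + M.D * u * w

/-- The liability `Y₁` after one period, from liability `y`, under noise `w`. -/
def nextLiability (y w : ℝ) : ℝ := M.Abar * y + M.Cbar * y * w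

/-- The matrix `F_t` of the Riccati recursion, for `P_{t+1} = Q`: the expected cost of the
uncontrolled motion. -/
def uncontrolledCost (Q : Matrix (Fin 2) (Fin 2) ℝ) : Matrix (Fin 2) (Fin 2) ℝ :=
  !![M.A ^ 2 * Q 0 0, M.A * M.Abar * Q 0 1;
     M.A * M.Abar * Q 0 1, (M.Abar ^ 2 + M.Cbar ^ 2) * Q 1 1]

/-- The scalar `G_t`, for `P_{t+1} = Q`: the coefficient of `u²` in the expected next cost. -/
def controlWeight (Q : Matrix (Fin 2) (Fin 2) ℝ) : ℝ := (M.B ^ 2 + M.D ^ 2) * Q 0 0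

/-- The vector `H_t`, for `P_{t+1} = Q`: the coefficient of `2u` in the expected next cost is
`H_t · (x, y)`. -/
def crossWeight (Q : Matrix (Fin 2) (Fin 2) ℝ) : Fin 2 → ℝ :=
  ![M.A * M.B * Q 0 0, (M.Abar * M.B + M.ρ * M.Cbar * M.D) * Q 1 0]

/-- One backward step `P_{t+1} ↦ P_t` of the Riccati recursion. -/
noncomputable def riccati (Q : Matrix (Fin 2) (Fin 2) ℝ) : Matrix (Fin 2) (Fin 2) ℝ :=
  M.uncontrolledCost Q
    - (1 / M.controlWeight Q) • vecMulVec (M.crossWeight Q) (M.crossWeight Q)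

/-- The mean of the optimal Gaussian control at the state `(x, y)`, for `P_{t+1} = Q`. -/
noncomputable def optimalMean (Q : Matrix (Fin 2) (Fin 2) ℝ) (x y : ℝ) : ℝ :=
  -(M.crossWeight Q ⬝ᵥ ![x, y]) / M.controlWeight Q

theorem isSymm_riccati (Q : Matrix (Fin 2) (Fin 2) ℝ) : (M.riccati Q).IsSymm := by
  have hF : (M.uncontrolledCost Q).IsSymm := by
    ext i j
    fin_cases i <;> fin_cases j <;> rfl
  exact hF.sub (IsSymm.smul (transpose_vecMulVec _ _) _)

variable {M} {Q : Matrix (Fin 2) (Fin 2) ℝ}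

theorem riccati_apply_zero_zero (hBD : M.B ^ 2 + M.D ^ 2 ≠ 0) (hQ : Q 0 0 ≠ 0) :
    M.riccati Q 0 0 = M.A ^ 2 * M.D ^ 2 / (M.B ^ 2 + M.D ^ 2) * Q 0 0 := by
  simp only [riccati, uncontrolledCost, controlWeight, crossWeight, Matrix.sub_apply,
    Matrix.smul_apply, vecMulVec_apply, of_apply, cons_val', cons_val_zero, smul_eq_mul]
  field_simp
  ring

theorem riccati_apply_zero_zero_pos (hA : M.A ≠ 0) (hD : M.D ≠ 0) (hQ : 0 < Q 0 0) :
    0 < M.riccati Q 0 0 := by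
  rw [riccati_apply_zero_zero (by positivity) hQ.ne']
  positivity

/-- The backward Riccati recursion on `{0, …, T}`, with terminal cost `(x - y)²`. -/
structure IsRiccatiSolution (M : AssetLiabilityModel) (T : ℕ)
    (P : ℕ → Matrix (Fin 2) (Fin 2) ℝ) : Prop where
  terminal : P T = !![1, -1; -1, 1]
  step : ∀ t < T, P t = M.riccati (P (t + 1))

namespace IsRiccatiSolution

variable {T t : ℕ} {P : ℕ → Matrix (Fin 2) (Fin 2) ℝ}

theorem isSymm (hP : M.IsRiccatiSolution T P) (ht : t ≤ T) : (P t).IsSymm := by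
  rcases ht.eq_or_lt with rfl | ht
  · rw [hP.terminal]
    ext i j
    fin_cases i <;> fin_cases j <;> rfl
  · rw [hP.step t ht]
    exact M.isSymm_riccati _

theorem apply_zero_zero_pos (hP : M.IsRiccatiSolution T P) (hA : M.A ≠ 0) (hD : M.D ≠ 0)
    (ht : t ≤ T) : 0 < P t 0 0 := by
  induction ht using Nat.decreasingInduction with
  | self => simp [hP.terminal]
  | of_succ t ht ih =>
    rw [hP.step t ht]
    exact riccati_apply_zero_zero_pos hA hD ih

theorem controlWeight_pos (hP : M.IsRiccatiSolution T P) (hA : M.A ≠ 0) (hD : M.D ≠ 0)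
    (ht : t ≤ T) : 0 < M.controlWeight (P t) :=
  mul_pos (by positivity) (hP.apply_zero_zero_pos hA hD ht)

end IsRiccatiSolution

section Expectation

variable {Ω : Type*} [MeasurableSpace Ω] {μ : Measure Ω} [IsProbabilityMeasure μ]
  {wx wy u : Ω → ℝ}

-- The factor `1` puts this in the form `a + b * X` of the second moment lemmas.
theorem nextWealth_eq_add_mul (x u w : ℝ) :
    M.nextWealth x u w = M.A * x + 1 * (u * (M.B + M.D * w)) := by
  rw [nextWealth]
  ring

theorem memLp_mul_return (hwx : MemLp wx 2 μ) (hu : MemLp u 2 μ) (hind : IndepFun u wx μ) :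
    MemLp (fun ω => u ω * (M.B + M.D * wx ω)) 2 μ :=
  memLp_two_mul_of_indepFun hu (memLp_affine hwx _ _)
    (hind.comp (φ := id) (ψ := fun w : ℝ => M.B + M.D * w) measurable_id (by fun_prop))

theorem memLp_nextWealth (hwx : MemLp wx 2 μ) (hu : MemLp u 2 μ) (hind : IndepFun u wx μ) (x : ℝ) :
    MemLp (fun ω => M.nextWealth x (u ω) (wx ω)) 2 μ := by
  simp only [nextWealth_eq_add_mul]
  exact memLp_affine (memLp_mul_return hwx hu hind) _ _

theorem memLp_nextLiability (hwy : MemLp wy 2 μ) (y : ℝ) :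
    MemLp (fun ω => M.nextLiability y (wy ω)) 2 μ :=
  memLp_affine hwy _ _

variable (hw : IsNormalizedNoise wx wy M.ρ μ) (hu : MemLp u 2 μ)
  (hind : IndepFun u (fun ω => (wx ω, wy ω)) μ)
include hw

theorem integral_nextLiability_sq (y : ℝ) :
    ∫ ω, M.nextLiability y (wy ω) ^ 2 ∂μ = (M.Abar ^ 2 + M.Cbar ^ 2) * y ^ 2 := by
  simp only [nextLiability, integral_sq_affine hw.memLp_snd, hw.integral_snd, hw.integral_snd_sq]
  ring

include hu hind

theorem integral_mul_return : ∫ ω, u ω * (M.B + M.D * wx ω) ∂μ = M.B * ∫ ω, u ω ∂μ := by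
  have hR := (memLp_affine hw.memLp_fst M.B M.D).aestronglyMeasurable
  have huR : IndepFun u (fun ω => M.B + M.D * wx ω) μ :=
    hind.comp (φ := id) (ψ := fun w : ℝ × ℝ => M.B + M.D * w.1) measurable_id (by fun_prop)
  rw [huR.integral_fun_mul_eq_mul_integral hu.1 hR,
    integral_affine (hw.memLp_fst.integrable one_le_two), hw.integral_fst]
  ring

theorem integral_mul_return_sq :
    ∫ ω, (u ω * (M.B + M.D * wx ω)) ^ 2 ∂μ = (M.B ^ 2 + M.D ^ 2) * ∫ ω, u ω ^ 2 ∂μ := by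
  have hR := (memLp_affine hw.memLp_fst M.B M.D).aestronglyMeasurable
  have huR : IndepFun (fun ω => u ω ^ 2) (fun ω => (M.B + M.D * wx ω) ^ 2) μ :=
    hind.comp (φ := fun v : ℝ => v ^ 2) (ψ := fun w : ℝ × ℝ => (M.B + M.D * w.1) ^ 2)
      (by fun_prop) (by fun_prop)
  simp only [mul_pow]
  rw [huR.integral_fun_mul_eq_mul_integral (hu.1.pow 2) (hR.pow 2),
    integral_sq_affine hw.memLp_fst, hw.integral_fst, hw.integral_fst_sq]
  ring

theorem integral_mul_return_mul_nextLiability (y : ℝ) :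
    ∫ ω, u ω * (M.B + M.D * wx ω) * M.nextLiability y (wy ω) ∂μ
      = (M.Abar * M.B + M.ρ * M.Cbar * M.D) * y * ∫ ω, u ω ∂μ := by
  have hR := (memLp_affine hw.memLp_fst M.B M.D).aestronglyMeasurable
  have hY := (memLp_nextLiability (M := M) hw.memLp_snd y).aestronglyMeasurable
  have huRY : IndepFun u (fun ω => (M.B + M.D * wx ω) * M.nextLiability y (wy ω)) μ :=
    hind.comp (φ := id) (ψ := fun w : ℝ × ℝ => (M.B + M.D * w.1) * M.nextLiability y w.2)
      measurable_id (by unfold nextLiability; fun_prop)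
  simp only [mul_assoc (u _)]
  rw [huRY.integral_fun_mul_eq_mul_integral hu.1 (hR.mul hY)]
  simp only [nextLiability]
  rw [integral_affine_mul_affine hw.memLp_fst hw.memLp_snd, hw.integral_fst, hw.integral_snd,
    hw.integral_mul]
  ring

theorem integral_nextWealth_sq (x : ℝ) :
    ∫ ω, M.nextWealth x (u ω) (wx ω) ^ 2 ∂μ
      = M.A ^ 2 * x ^ 2 + 2 * (M.A * M.B * x) * (∫ ω, u ω ∂μ)
        + (M.B ^ 2 + M.D ^ 2) * ∫ ω, u ω ^ 2 ∂μ := by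
  have huR := memLp_mul_return (M := M) hw.memLp_fst hu (hind.comp measurable_id measurable_fst)
  simp only [nextWealth_eq_add_mul]
  rw [integral_sq_affine huR, integral_mul_return hw hu hind, integral_mul_return_sq hw hu hind]
  ring

theorem integral_nextWealth_mul_nextLiability (x y : ℝ) :
    ∫ ω, M.nextWealth x (u ω) (wx ω) * M.nextLiability y (wy ω) ∂μ
      = M.A * M.Abar * (x * y)
        + (M.Abar * M.B + M.ρ * M.Cbar * M.D) * y * ∫ ω, u ω ∂μ := by
  have huR := memLp_mul_return (M := M) hw.memLp_fst hu (hind.comp measurable_id measurable_fst)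
  have hY := memLp_nextLiability (M := M) hw.memLp_snd y
  have hYmean : ∫ ω, M.nextLiability y (wy ω) ∂μ = M.Abar * y := by
    simp only [nextLiability]
    rw [integral_affine (hw.memLp_snd.integrable one_le_two), hw.integral_snd, mul_zero, add_zero]
  have hexpand := integral_affine_mul_affine huR hY (M.A * x) 1 0 1
  rw [hYmean, integral_mul_return_mul_nextLiability hw hu hind] at hexpand
  simp only [nextWealth_eq_add_mul]
  simp only [zero_add, one_mul] at hexpand ⊢
  rw [hexpand]
  ring

theorem integral_quadForm_next (hQ : Q.IsSymm) (x y : ℝ) :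
    ∫ ω, ![M.nextWealth x (u ω) (wx ω), M.nextLiability y (wy ω)] ⬝ᵥ
        (Q *ᵥ ![M.nextWealth x (u ω) (wx ω), M.nextLiability y (wy ω)]) ∂μ
      = ![x, y] ⬝ᵥ (M.uncontrolledCost Q *ᵥ ![x, y])
        + 2 * (M.crossWeight Q ⬝ᵥ ![x, y]) * (∫ ω, u ω ∂μ)
        + M.controlWeight Q * ∫ ω, u ω ^ 2 ∂μ := by
  have hX := memLp_nextWealth (M := M) hw.memLp_fst hu (hind.comp measurable_id measurable_fst) x
  have hY := memLp_nextLiability (M := M) hw.memLp_snd y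
  rw [integral_vec2_dotProduct_mulVec hX hY, integral_nextWealth_sq hw hu hind,
    integral_nextWealth_mul_nextLiability hw hu hind, integral_nextLiability_sq hw,
    vec2_dotProduct_mulVec, crossWeight, vec2_dotProduct', hQ.apply 0 1]
  simp only [uncontrolledCost, controlWeight, of_apply, cons_val', cons_val_zero, cons_val_one,
    cons_val_fin_one]
  ring

theorem integral_quadForm_next_eq_riccati (hQ : Q.IsSymm) (hG : M.controlWeight Q ≠ 0) (x y : ℝ) :
    ∫ ω, ![M.nextWealth x (u ω) (wx ω), M.nextLiability y (wy ω)] ⬝ᵥ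
        (Q *ᵥ ![M.nextWealth x (u ω) (wx ω), M.nextLiability y (wy ω)]) ∂μ
      = ![x, y] ⬝ᵥ (M.riccati Q *ᵥ ![x, y])
        + M.controlWeight Q * ∫ ω, (u ω - M.optimalMean Q x y) ^ 2 ∂μ := by
  have hcentred : ∫ ω, (u ω - M.optimalMean Q x y) ^ 2 ∂μ
      = M.optimalMean Q x y ^ 2 - 2 * M.optimalMean Q x y * (∫ ω, u ω ∂μ)
        + ∫ ω, u ω ^ 2 ∂μ := by
    have := integral_sq_affine hu (-M.optimalMean Q x y) 1
    simp only [one_mul, neg_add_eq_sub] at this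
    rw [this]
    ring
  rw [integral_quadForm_next hw hu hind hQ, hcentred, riccati,
    dotProduct_sub_smul_vecMulVec_mulVec, optimalMean]
  field_simp
  ring

end Expectation

/-- The value function `V(t, x, y)` with temperature `lam` and horizon `T`, built on the cost
matrices `P`; `G_k` is the control weight of `P_{k+1}`. -/
noncomputable def value (M : AssetLiabilityModel) (lam : ℝ) (T : ℕ)
    (P : ℕ → Matrix (Fin 2) (Fin 2) ℝ) (t : ℕ) (x y : ℝ) : ℝ :=
  ![x, y] ⬝ᵥ (P t *ᵥ ![x, y])
    + lam / 2 * ∑ k ∈ Finset.Ico t T, Real.log (M.controlWeight (P (k + 1)) / (Real.pi * lam))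

namespace IsRiccatiSolution

variable {T t : ℕ} {P : ℕ → Matrix (Fin 2) (Fin 2) ℝ} (hP : M.IsRiccatiSolution T P)
include hP

theorem value_terminal (lam x y : ℝ) : M.value lam T P T x y = (x - y) ^ 2 := by
  rw [value, hP.terminal, vec2_dotProduct_mulVec, Finset.Ico_self, Finset.sum_empty]
  simp only [of_apply, cons_val', cons_val_zero, cons_val_one, cons_val_fin_one]
  ring

variable {Ω : Type*} [MeasurableSpace Ω] {μ : Measure Ω} [IsProbabilityMeasure μ]
  {wx wy u : Ω → ℝ} {p : ℝ → ℝ}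
  (hA : M.A ≠ 0) (hD : M.D ≠ 0) (ht : t < T) (hw : IsNormalizedNoise wx wy M.ρ μ)
include hA hD ht hw

theorem integral_value_next (hu : MemLp u 2 μ) (hind : IndepFun u (fun ω => (wx ω, wy ω)) μ)
    (lam x y : ℝ) :
    ∫ ω, M.value lam T P (t + 1) (M.nextWealth x (u ω) (wx ω)) (M.nextLiability y (wy ω)) ∂μ
      = M.value lam T P t x y
        - lam / 2 * Real.log (M.controlWeight (P (t + 1)) / (Real.pi * lam))
        + M.controlWeight (P (t + 1))
          * ∫ ω, (u ω - M.optimalMean (P (t + 1)) x y) ^ 2 ∂μ := by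
  have hX := memLp_nextWealth (M := M) hw.memLp_fst hu (hind.comp measurable_id measurable_fst) x
  have hY := memLp_nextLiability (M := M) hw.memLp_snd y
  simp only [value]
  rw [integral_add (integrable_vec2_dotProduct_mulVec hX hY _) (integrable_const _),
    integral_quadForm_next_eq_riccati hw hu hind (hP.isSymm ht)
      (hP.controlWeight_pos hA hD ht).ne',
    ← hP.step t ht, integral_const, probReal_univ, one_smul,
    Finset.sum_eq_sum_Ico_succ_bot ht]
  ring

variable (hp1 : ∫ v, p v = 1) (hp0 : ∀ᵐ v, 0 ≤ p v) (hp2 : Integrable fun v => v ^ 2 * p v)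
  (hu : AEMeasurable u μ) (hmap : μ.map u = volume.withDensity fun v => ENNReal.ofReal (p v))
  (hind : IndepFun u (fun ω => (wx ω, wy ω)) μ)
include hp1 hp0 hp2 hu hmap hind

theorem integral_value_next_of_density (lam x y : ℝ) :
    ∫ ω, M.value lam T P (t + 1) (M.nextWealth x (u ω) (wx ω)) (M.nextLiability y (wy ω)) ∂μ
      = M.value lam T P t x y
        - lam / 2 * Real.log (M.controlWeight (P (t + 1)) / (Real.pi * lam))
        + M.controlWeight (P (t + 1))
          * ∫ v, (v - M.optimalMean (P (t + 1)) x y) ^ 2 * p v := by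
  have hp := (integrable_of_integral_eq_one hp1).aemeasurable
  have huL2 := memLp_two_of_map_eq_withDensity hp hp0 hu hmap hp2
  rw [integral_value_next hP hA hD ht hw huL2 hind,
    integral_comp_of_map_eq_withDensity (f := fun v => (v - M.optimalMean (P (t + 1)) x y) ^ 2)
      hp hp0 hu hmap (by fun_prop)]
  simp only [smul_eq_mul, mul_comm]

theorem bellman_le {lam : ℝ} (hlam : 0 < lam)
    (hplog : Integrable fun v => p v * Real.log (p v)) (x y : ℝ) :
    M.value lam T P t x y ≤
      (∫ ω, M.value lam T P (t + 1) (M.nextWealth x (u ω) (wx ω)) (M.nextLiability y (wy ω)) ∂μ)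
        + lam * ∫ v, p v * Real.log (p v) := by
  have hp := (integrable_of_integral_eq_one hp1).aemeasurable
  have huL2 := memLp_two_of_map_eq_withDensity hp hp0 hu hmap hp2
  have hfree := le_integral_sq_sub_mul_add_integral_mul_log (hP.controlWeight_pos hA hD ht) hlam
    hp0 hp1 (integrable_sq_sub_mul_of_map_eq_withDensity hp hp0 huL2 hmap
      (M.optimalMean (P (t + 1)) x y)) hplog
  rw [integral_value_next_of_density hP hA hD ht hw hp1 hp0 hp2 hu hmap hind]
  linarith

theorem bellman_eq {lam : ℝ} (hlam : 0 < lam) (x y : ℝ)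
    (hgauss : p = gaussianDensity (M.optimalMean (P (t + 1)) x y)
      (lam / (2 * M.controlWeight (P (t + 1))))) :
    (∫ ω, M.value lam T P (t + 1) (M.nextWealth x (u ω) (wx ω)) (M.nextLiability y (wy ω)) ∂μ)
        + lam * ∫ v, p v * Real.log (p v)
      = M.value lam T P t x y := by
  have hp := (integrable_of_integral_eq_one hp1).aemeasurable
  have huL2 := memLp_two_of_map_eq_withDensity hp hp0 hu hmap hp2
  have hfree := integral_sq_sub_mul_add_integral_mul_log_gaussianDensity
    (hP.controlWeight_pos hA hD ht) hlam hp1 (integrable_sq_sub_mul_of_map_eq_withDensity hp hp0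
      huL2 hmap (M.optimalMean (P (t + 1)) x y))
  rw [← hgauss] at hfree
  rw [integral_value_next_of_density hP hA hD ht hw hp1 hp0 hp2 hu hmap hind]
  linarith

end IsRiccatiSolution

end AssetLiabilityModel

/-- Dynamic-programming verification (case `C = 0`): with
`V(t,x,y) = (x,y)P_t(x,y)ᵀ + (λ/2)Σ_{k=t}^{T−1} ln(G_k/(πλ))`, one has
`V(T,x,y) = (x−y)²`, and for every `t < T` the exploratory Bellman inequality
`E[V(t+1, X₁, Y₁)] + λ∫p ln p ≥ V(t,x,y)` holds for every admissible control density
`p` and control `u` with density `p` independent of the noises, with equality when `p`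
is the Gaussian density `N(−(H_t·(x,y))/G_t, λ/(2G_t))`. -/
theorem stmt_15 {Ω : Type*} [MeasurableSpace Ω] (μ : Measure Ω) [IsProbabilityMeasure μ]
    (wx wy : Ω → ℝ) (hwxm : Measurable wx) (hwym : Measurable wy)
    (hwx2 : Integrable (fun ω => wx ω ^ 2) μ) (hwy2 : Integrable (fun ω => wy ω ^ 2) μ)
    (hwx0 : ∫ ω, wx ω ∂μ = 0) (hwy0 : ∫ ω, wy ω ∂μ = 0)
    (hwxv : ∫ ω, wx ω ^ 2 ∂μ = 1) (hwyv : ∫ ω, wy ω ^ 2 ∂μ = 1)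
    (ρ : ℝ) (hρ : ∫ ω, wx ω * wy ω ∂μ = ρ)
    (T : ℕ) (A B D Abar Cbar lam : ℝ)
    (hA : A ≠ 0) (hD : D ≠ 0) (hBD : 0 < B ^ 2 + D ^ 2) (hlam : 0 < lam)
    (P : ℕ → Matrix (Fin 2) (Fin 2) ℝ)
    (hPT : P T = !![1, -1; -1, 1])
    (hrec : ∀ t, t < T →
      P t = !![A ^ 2 * P (t + 1) 0 0, A * Abar * P (t + 1) 0 1;
               A * Abar * P (t + 1) 0 1, (Abar ^ 2 + Cbar ^ 2) * P (t + 1) 1 1]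
            - (1 / ((B ^ 2 + D ^ 2) * P (t + 1) 0 0)) •
                vecMulVec
                  ![A * B * P (t + 1) 0 0, (Abar * B + ρ * Cbar * D) * P (t + 1) 1 0]
                  ![A * B * P (t + 1) 0 0, (Abar * B + ρ * Cbar * D) * P (t + 1) 1 0])
    (V : ℕ → ℝ → ℝ → ℝ)
    (hV : ∀ t x y, V t x y =
      ![x, y] ⬝ᵥ (P t *ᵥ ![x, y])
        + (lam / 2) * ∑ k ∈ Finset.Ico t T,
            Real.log (((B ^ 2 + D ^ 2) * P (k + 1) 0 0) / (Real.pi * lam))) :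
    (∀ x y : ℝ, V T x y = (x - y) ^ 2)
    ∧ ∀ t, t < T → ∀ x y : ℝ,
        ∀ p : ℝ → ℝ, Measurable p → (∀ v, 0 ≤ p v) → (∫ v, p v) = 1 →
          Integrable (fun v => v ^ 2 * p v) →
          Integrable (fun v => p v * |Real.log (p v)|) →
          ∀ u : Ω → ℝ, Measurable u →
            Measure.map u μ = volume.withDensity (fun v => ENNReal.ofReal (p v)) →
            IndepFun u (fun ω => (wx ω, wy ω)) μ →
            ((∫ ω, V (t + 1) (A * x + B * u ω + D * u ω * wx ω)
                 (Abar * y + Cbar * y * wy ω) ∂μ)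
                + lam * ∫ v, p v * Real.log (p v)
              ≥ V t x y)
            ∧ (p = gaussianDensity
                  (-(![A * B * P (t + 1) 0 0,
                      (Abar * B + ρ * Cbar * D) * P (t + 1) 1 0] ⬝ᵥ ![x, y])
                    / ((B ^ 2 + D ^ 2) * P (t + 1) 0 0))
                  (lam / (2 * ((B ^ 2 + D ^ 2) * P (t + 1) 0 0))) →
                (∫ ω, V (t + 1) (A * x + B * u ω + D * u ω * wx ω)
                    (Abar * y + Cbar * y * wy ω) ∂μ)
                  + lam * ∫ v, p v * Real.log (p v)
                = V t x y) := by
  let M : AssetLiabilityModel := ⟨A, B, D, Abar, Cbar, ρ⟩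
  have hP : M.IsRiccatiSolution T P := ⟨hPT, hrec⟩
  obtain rfl : V = M.value lam T P := by
    funext t x y
    exact hV t x y
  have hw : IsNormalizedNoise wx wy M.ρ μ :=
    ⟨(memLp_two_iff_integrable_sq hwxm.aestronglyMeasurable).2 hwx2,
      (memLp_two_iff_integrable_sq hwym.aestronglyMeasurable).2 hwy2, hwx0, hwy0, hwxv, hwyv, hρ⟩
  refine ⟨hP.value_terminal lam, fun t ht x y p hp hp0 hp1 hp2 hplog u hu hmap hind => ?_⟩
  have hplogp : Integrable fun v => p v * Real.log (p v) :=
    hplog.mono (by fun_prop) (.of_forall fun v => by simp)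
  exact ⟨hP.bellman_le hA hD ht hw hp1 (.of_forall hp0) hp2 hu.aemeasurable hmap hind hlam hplogp
      x y,
    hP.bellman_eq hA hD ht hw hp1 (.of_forall hp0) hp2 hu.aemeasurable hmap hind hlam x y⟩
end

section
/- Let λ > 0, G > 0, h, k ∈ ℝ² and F a symmetric real 2×2 matrix. For every z ∈ ℝ² and every σ > 0, zᵀ F z − (h·z)²/G + (λ/2) ln(G/(πλ)) ≤ zᵀ F z + 2 (h·z)(k·z) + G ((k·z)² + σ²) − (λ/2) ln(2πσ²) − λ/2; that is, replacing any Gaussian linear feedback policy with mean k·z and variance σ² by the Gaussian policy with mean −(h·z)/G and variance λ/(2G) never increases the one-step entropy-regularized value. -/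
open Matrix

/-- The one-step entropy-regularized value of the Gaussian policy with mean `m` and variance `v`:
the expectation of `c + 2 * b * u + G * u ^ 2 + lam * log (density of u)` over the action `u`.
At a state `z`, the paper's data are `c = zᵀFz` and `b = h·z`. -/
noncomputable def gaussianPolicyValue (lam G c b m v : ℝ) : ℝ :=
  c + 2 * b * m + G * (m ^ 2 + v) - lam / 2 * Real.log (2 * Real.pi * v) - lam / 2

section PolicyImprovement

variable {lam G : ℝ}

theorem gaussianPolicyValue_sub_optimalMean (hG : G ≠ 0) (c b m v : ℝ) :
    gaussianPolicyValue lam G c b m v - gaussianPolicyValue lam G c b (-b / G) v =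
      G * (m + b / G) ^ 2 := by
  unfold gaussianPolicyValue
  field_simp
  ring

theorem gaussianPolicyValue_optimalMean_le (hG : 0 < G) (c b m v : ℝ) :
    gaussianPolicyValue lam G c b (-b / G) v ≤ gaussianPolicyValue lam G c b m v := by
  rw [← sub_nonneg, gaussianPolicyValue_sub_optimalMean hG.ne']
  positivity

theorem gaussianPolicyValue_sub_variance {v w : ℝ} (hv : v ≠ 0) (hw : w ≠ 0) (c b m : ℝ) :
    gaussianPolicyValue lam G c b m v - gaussianPolicyValue lam G c b m w =
      G * (v - w) - lam / 2 * Real.log (v / w) := by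
  have two_pi_ne_zero : 2 * Real.pi ≠ 0 := Real.two_pi_pos.ne'
  rw [gaussianPolicyValue, gaussianPolicyValue, Real.log_mul two_pi_ne_zero hv,
    Real.log_mul two_pi_ne_zero hw, Real.log_div hv hw]
  ring

theorem gaussianPolicyValue_optimalVariance_le (hlam : 0 < lam) (hG : 0 < G) (c b m : ℝ) {v : ℝ}
    (hv : 0 < v) :
    gaussianPolicyValue lam G c b m (lam / (2 * G)) ≤ gaussianPolicyValue lam G c b m v := by
  have hw : 0 < lam / (2 * G) := by positivity
  rw [← sub_nonneg, gaussianPolicyValue_sub_variance hv.ne' hw.ne', sub_nonneg]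
  calc
    lam / 2 * Real.log (v / (lam / (2 * G))) ≤ lam / 2 * (v / (lam / (2 * G)) - 1) := by
      gcongr
      exact Real.log_le_sub_one_of_pos (div_pos hv hw)
    _ = G * (v - lam / (2 * G)) := by field_simp

theorem gaussianPolicyValue_optimal (hlam : lam ≠ 0) (hG : G ≠ 0) (c b : ℝ) :
    gaussianPolicyValue lam G c b (-b / G) (lam / (2 * G)) =
      c - b ^ 2 / G + lam / 2 * Real.log (G / (Real.pi * lam)) := by
  have log_arg : 2 * Real.pi * (lam / (2 * G)) = (G / (Real.pi * lam))⁻¹ := by field_simp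
  rw [gaussianPolicyValue, log_arg, Real.log_inv]
  field_simp
  ring

end PolicyImprovement

theorem stmt_19_general {ι : Type*} [Fintype ι] {lam G : ℝ} (hlam : 0 < lam) (hG : 0 < G)
    (h : ι → ℝ) (F : Matrix ι ι ℝ) (z : ι → ℝ) (m : ℝ) {v : ℝ} (hv : 0 < v) :
    z ⬝ᵥ (F *ᵥ z) - (h ⬝ᵥ z) ^ 2 / G + lam / 2 * Real.log (G / (Real.pi * lam)) ≤
      z ⬝ᵥ (F *ᵥ z) + 2 * (h ⬝ᵥ z) * m + G * (m ^ 2 + v)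
        - lam / 2 * Real.log (2 * Real.pi * v) - lam / 2 := by
  set c := z ⬝ᵥ (F *ᵥ z)
  set b := h ⬝ᵥ z
  calc
    c - b ^ 2 / G + lam / 2 * Real.log (G / (Real.pi * lam))
        = gaussianPolicyValue lam G c b (-b / G) (lam / (2 * G)) :=
      (gaussianPolicyValue_optimal hlam.ne' hG.ne' c b).symm
    _ ≤ gaussianPolicyValue lam G c b (-b / G) v :=
      gaussianPolicyValue_optimalVariance_le hlam hG c b (-b / G) hv
    _ ≤ gaussianPolicyValue lam G c b m v := gaussianPolicyValue_optimalMean_le hG c b m v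

/-- One-step policy improvement inequality: replacing a Gaussian linear feedback policy
with mean `k·z` and variance `σ²` by the Gaussian policy with mean `−(h·z)/G` and
variance `λ/(2G)` never increases the one-step entropy-regularized value:
`zᵀFz − (h·z)²/G + (λ/2)ln(G/(πλ)) ≤ zᵀFz + 2(h·z)(k·z) + G((k·z)² + σ²)
  − (λ/2)ln(2πσ²) − λ/2`. -/
theorem stmt_19 (lam G : ℝ) (hlam : 0 < lam) (hG : 0 < G)
    (h k : Fin 2 → ℝ) (F : Matrix (Fin 2) (Fin 2) ℝ) (hF : F.IsSymm) :
    ∀ (z : Fin 2 → ℝ) (σ : ℝ), 0 < σ →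
      z ⬝ᵥ (F *ᵥ z) - (h ⬝ᵥ z) ^ 2 / G
          + (lam / 2) * Real.log (G / (Real.pi * lam))
        ≤ z ⬝ᵥ (F *ᵥ z) + 2 * (h ⬝ᵥ z) * (k ⬝ᵥ z) + G * ((k ⬝ᵥ z) ^ 2 + σ ^ 2)
          - (lam / 2) * Real.log (2 * Real.pi * σ ^ 2) - lam / 2 :=
  fun z _ hσ => stmt_19_general hlam hG h F z (k ⬝ᵥ z) (pow_pos hσ 2)
end
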